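/- arXiv:2308.12719 — 2 statements merged into one kernel-verified Lean document; each statement's English description precedes it below -/
import Mathlib

section
/- Let Δ be a Fano simplex of dimension d ≥ 2 and Gorenstein index g ≥ 1 with (d,g) ≠ (2,1). Then Vol(Δ) ≤ 2·t_{g,d}²/g². Equality holds if and only if Δ ≅ Δ(P), where P is either the 3×4 matrix with columns (1,0,0), (1,2,0), (1,2,6), (−5,−4,−6), or the d×(d+1) matrix whose first d−1 columns are the standard basis vectors e₁,…,e_{d−1}, whose d-th column v has entries v_k = ((s_{g,k}−g)/s_{g,k})·(t_{g,d}/g) for k = 1,…,d−1 and v_d = t_{g,d}/g, and whose last column w has entries w_k = −((s_{g,k}+g)/s_{g,k})·(t_{g,d}/g) for k = 1,…,d−1 and w_d = −t_{g,d}/g. -/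
open Finset Pointwise

/-- Cast an integer vector to a rational vector. -/
def toQ {d : ℕ} (v : Fin d → ℤ) : Fin d → ℚ := fun j => (v j : ℚ)

/-- An integer vector is primitive if the gcd of its entries is 1. -/
def IsPrimitive {d : ℕ} (v : Fin d → ℤ) : Prop := Finset.univ.gcd v = 1

/-- The origin lies in the interior of the simplex with the given vertices,
i.e. the origin is a convex combination of the vertices with positive coefficients. -/
def OriginInInterior {d : ℕ} (v : Fin (d + 1) → Fin d → ℚ) : Prop :=
  ∃ w : Fin (d + 1) → ℚ, (∀ i, 0 < w i) ∧ ∑ i, w i = 1 ∧ ∀ j, ∑ i, w i * v i j = 0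

/-- A Fano simplex, given by its tuple of vertices: the vertices are primitive integer
vectors, affinely independent, and the origin lies in the interior. -/
def IsFanoSimplex {d : ℕ} (v : Fin (d + 1) → Fin d → ℤ) : Prop :=
  AffineIndependent ℚ (fun i => toQ (v i)) ∧ (∀ i, IsPrimitive (v i)) ∧
    OriginInInterior fun i => toQ (v i)

/-- The simplex spanned by the given vertices. -/
def simplexHull {d : ℕ} (v : Fin (d + 1) → Fin d → ℚ) : Set (Fin d → ℚ) :=
  convexHull ℚ (Set.range v)

/-- The dual body `Δ* = {u : ⟨u,v⟩ ≥ -1 for all v ∈ Δ}`. -/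
def dualBody {d : ℕ} (S : Set (Fin d → ℚ)) : Set (Fin d → ℚ) :=
  {u | ∀ x ∈ S, -1 ≤ ∑ j, u j * x j}

/-- A set is a lattice polytope iff it is the convex hull of its integral points
(equivalently, all its vertices are lattice points). -/
def IsLatticeSet {d : ℕ} (S : Set (Fin d → ℚ)) : Prop :=
  S = convexHull ℚ {x ∈ S | ∀ j, ∃ z : ℤ, x j = (z : ℚ)}

/-- The Gorenstein index: the least positive integer `g` such that `g • Δ*` is a
lattice polytope. -/
noncomputable def gorensteinIndex {d : ℕ} (v : Fin (d + 1) → Fin d → ℚ) : ℕ :=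
  sInf {g : ℕ | 0 < g ∧ IsLatticeSet ((g : ℚ) • dualBody (simplexHull v))}

/-- The normalized volume `d! · vol(Δ)` of the simplex with the given vertices. -/
def normVol {d : ℕ} (v : Fin (d + 1) → Fin d → ℚ) : ℚ :=
  |(Matrix.of fun i j : Fin d => v i.succ j - v 0 j).det|

/-- Two (Fano) simplices, given by their vertex tuples, are isomorphic iff some
unimodular integer matrix maps the vertex set of one onto the vertex set of the other. -/
def IsIsomorphicTo {d : ℕ} (v w : Fin (d + 1) → Fin d → ℤ) : Prop :=
  ∃ (U : Matrix (Fin d) (Fin d) ℤ) (σ : Equiv.Perm (Fin (d + 1))),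
    IsUnit U.det ∧ ∀ i, U.mulVec (v i) = w (σ i)


/-- Isomorphism onto a simplex given by a rational vertex matrix: a unimodular
integer matrix maps the vertex set of `v` onto the columns of `w`. -/
def IsIsomorphicToQ {d : ℕ} (v : Fin (d + 1) → Fin d → ℤ)
    (w : Fin (d + 1) → Fin d → ℚ) : Prop :=
  ∃ (U : Matrix (Fin d) (Fin d) ℤ) (σ : Equiv.Perm (Fin (d + 1))),
    IsUnit U.det ∧ ∀ i, (U.map (Int.cast : ℤ → ℚ)).mulVec (toQ (v i)) = w (σ i)

/-- The `g`-Sylvester sequence: `s_{g,1} = g+1`, `s_{g,k+1} = s_{g,k}(s_{g,k}-1)+1`.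
(The value at `0` is junk and never used.) -/
def sylv (g : ℕ) : ℕ → ℕ
  | 0 => 0
  | 1 => g + 1
  | k + 2 => sylv g (k + 1) * (sylv g (k + 1) - 1) + 1

/-- The truncated `g`-Sylvester sequence `t_{g,k} = s_{g,k} - 1`. -/
def tsylv (g k : ℕ) : ℕ := sylv g k - 1

/-- The exceptional 3×4 vertex matrix with columns (1,0,0), (1,2,0), (1,2,6), (-5,-4,-6),
written for general `d` (it is used only when `d = 3`). -/
def Pexc (d : ℕ) : Fin (d + 1) → Fin d → ℚ := fun i j =>
  if i.val = 0 then (if j.val = 0 then 1 else 0)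
  else if i.val = 1 then (if j.val = 0 then 1 else if j.val = 1 then 2 else 0)
  else if i.val = 2 then
    (if j.val = 0 then 1 else if j.val = 1 then 2 else if j.val = 2 then 6 else 0)
  else (if j.val = 0 then -5 else if j.val = 1 then -4 else -6)

/-- The general extremal `d×(d+1)` vertex matrix: the first `d-1` columns are the
standard basis vectors `e_1,…,e_{d-1}`, the `d`-th column has entries
`((s_{g,k}-g)/s_{g,k})·(t_{g,d}/g)` for `k = 1,…,d-1` and last entry `t_{g,d}/g`, and
the last column has entries `-((s_{g,k}+g)/s_{g,k})·(t_{g,d}/g)` for `k = 1,…,d-1`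
and last entry `-t_{g,d}/g`. -/
def Pgen (g d : ℕ) : Fin (d + 1) → Fin d → ℚ := fun i j =>
  if i.val < d - 1 then (if j.val = i.val then 1 else 0)
  else if i.val = d - 1 then
    (if j.val < d - 1 then
      ((sylv g (j.val + 1) : ℚ) - (g : ℚ)) / (sylv g (j.val + 1) : ℚ) *
        ((tsylv g d : ℚ) / (g : ℚ))
    else (tsylv g d : ℚ) / (g : ℚ))
  else
    (if j.val < d - 1 then
      -(((sylv g (j.val + 1) : ℚ) + (g : ℚ)) / (sylv g (j.val + 1) : ℚ) *
        ((tsylv g d : ℚ) / (g : ℚ)))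
    else -((tsylv g d : ℚ) / (g : ℚ)))

/-! ### Part 1: combinatorics of unit fraction partitions -/

lemma sound (m : ℕ) (a b : ℕ → ℝ) (ha : ∀ i < m, 0 < a i) (hb : ∀ i < m, 0 < b i)
    (hanti : ∀ i, i + 1 < m → a (i + 1) ≤ a i)
    (hp : ∀ l ≤ m, ∏ i ∈ range l, a i ≤ ∏ i ∈ range l, b i)
    (hs : ∑ i ∈ range m, b i ≤ ∑ i ∈ range m, a i) : ∀ i < m, a i = b i := by
  have key : ∀ l < m, a l * Real.log ((∏ i ∈ range (l + 1), b i) / ∏ i ∈ range (l + 1), a i) ≤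
      ∑ i ∈ range (l + 1), a i * Real.log (b i / a i) := by
    intro l
    induction l with
    | zero => intro h; simp
    | succ l ih =>
      intro h
      have ih' := ih (by omega)
      have hA : 0 < ∏ i ∈ range (l + 1), a i :=
        Finset.prod_pos (fun i hi => ha i (by have := Finset.mem_range.1 hi; omega))
      have hB : 0 < ∏ i ∈ range (l + 1), b i :=
        Finset.prod_pos (fun i hi => hb i (by have := Finset.mem_range.1 hi; omega))
      have hal := ha (l + 1) h
      have hbl := hb (l + 1) h
      rw [Finset.sum_range_succ, Finset.prod_range_succ b, Finset.prod_range_succ a]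
      have e1 : Real.log ((∏ i ∈ range (l + 1), b i) * b (l + 1) /
          ((∏ i ∈ range (l + 1), a i) * a (l + 1))) =
          Real.log ((∏ i ∈ range (l + 1), b i) / ∏ i ∈ range (l + 1), a i) +
            Real.log (b (l + 1) / a (l + 1)) := by
        rw [mul_div_mul_comm, Real.log_mul (by positivity) (by positivity)]
      rw [e1, mul_add]
      have hlog : 0 ≤ Real.log ((∏ i ∈ range (l + 1), b i) / ∏ i ∈ range (l + 1), a i) := by
        apply Real.log_nonneg
        rw [one_le_div hA]
        exact hp _ (by omega)
      have := mul_le_mul_of_nonneg_right (hanti l h) hlog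
      linarith
  rcases Nat.eq_zero_or_pos m with rfl | hm
  · intro i hi; omega
  obtain ⟨n, rfl⟩ : ∃ n, m = n + 1 := ⟨m - 1, by omega⟩
  have h0 : 0 ≤ ∑ i ∈ range (n + 1), a i * Real.log (b i / a i) := by
    refine le_trans ?_ (key n (by omega))
    apply mul_nonneg (ha n (by omega)).le
    apply Real.log_nonneg
    rw [one_le_div (Finset.prod_pos (fun i hi => ha i (Finset.mem_range.1 hi)))]
    exact hp _ le_rfl
  have hterm : ∀ i ∈ range (n + 1), 0 ≤ b i - a i - a i * Real.log (b i / a i) := by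
    intro i hi
    have hai := ha i (Finset.mem_range.1 hi)
    have hbi := hb i (Finset.mem_range.1 hi)
    have h1 := Real.log_le_sub_one_of_pos (show 0 < b i / a i by positivity)
    have h2 := mul_le_mul_of_nonneg_left h1 hai.le
    have h3 : a i * (b i / a i - 1) = b i - a i := by field_simp
    linarith
  have hz : ∑ i ∈ range (n + 1), (b i - a i - a i * Real.log (b i / a i)) = 0 := by
    apply le_antisymm
    · rw [Finset.sum_sub_distrib, Finset.sum_sub_distrib]; linarith
    · exact Finset.sum_nonneg hterm
  intro i hi
  have h4 := (Finset.sum_eq_zero_iff_of_nonneg hterm).1 hz i (Finset.mem_range.2 hi)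
  have hai := ha i hi
  have hbi := hb i hi
  by_contra hne
  have h1 := Real.log_lt_sub_one_of_pos (show 0 < b i / a i by positivity)
    (by intro h; rw [div_eq_one_iff_eq hai.ne'] at h; exact hne h.symm)
  have h2 := mul_lt_mul_of_pos_left h1 hai
  have h3 : a i * (b i / a i - 1) = b i - a i := by field_simp
  linarith

/-- Abstract comparison lemma. -/
lemma comparison (n : ℕ) (g : ℝ) (hg : 0 < g) (x y : ℕ → ℝ)
    (hx : ∀ i < n, 0 < x i) (hy : ∀ i < n, 0 < y i)
    (hanti : ∀ i, i + 1 < n → x (i + 1) ≤ x i)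
    (htx : ∀ k < n, ∏ i ∈ range k, x i ≤ g * (∑ i ∈ range n, x i - ∑ i ∈ range k, x i))
    (hty : ∀ k < n, ∏ i ∈ range k, y i = g * (∑ i ∈ range n, y i - ∑ i ∈ range k, y i)) :
    ∀ j ≤ n, ∏ i ∈ range j, x i ≤ ∏ i ∈ range j, y i → (∀ i < n, j ≤ i → x i = y i) →
      ∀ i < n, x i = y i := by
  intro j
  induction j using Nat.strong_induction_on with
  | _ j ih =>
    intro hj hprod htail
    rcases Nat.eq_zero_or_pos j with rfl | hjpos
    · intro i hi; exact htail i hi (Nat.zero_le _)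
    obtain ⟨k, hkj, hk1, hk2⟩ : ∃ k < j, ∏ i ∈ range k, y i ≤ ∏ i ∈ range k, x i ∧
        ∀ l, k < l → l < j → ∏ i ∈ range l, x i ≤ ∏ i ∈ range l, y i := by
      classical
      let S := (range j).filter (fun k => ∏ i ∈ range k, y i ≤ ∏ i ∈ range k, x i)
      have hS : S.Nonempty := ⟨0, by simp [S, hjpos]⟩
      have hmem := Finset.max'_mem S hS
      refine ⟨S.max' hS, ?_, ?_, ?_⟩
      · have := (Finset.mem_filter.1 hmem).1
        exact Finset.mem_range.1 this
      · exact (Finset.mem_filter.1 hmem).2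
      · intro l hl hlj
        by_contra hcon
        have : l ∈ S := Finset.mem_filter.2 ⟨Finset.mem_range.2 hlj, (not_le.1 hcon).le⟩
        have := Finset.le_max' S l this
        omega
    have hk3 : ∀ l, k < l → l ≤ j → ∏ i ∈ range l, x i ≤ ∏ i ∈ range l, y i := by
      intro l h1 h2
      rcases h2.lt_or_eq with h | h
      · exact hk2 l h1 h
      · rw [h]; exact hprod
    obtain ⟨m, rfl⟩ : ∃ m, j = k + m := ⟨j - k, by omega⟩
    have hxk : 0 < ∏ i ∈ range k, x i :=
      Finset.prod_pos (fun i hi => hx i (by have := Finset.mem_range.1 hi; omega))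
    have hyk : 0 < ∏ i ∈ range k, y i :=
      Finset.prod_pos (fun i hi => hy i (by have := Finset.mem_range.1 hi; omega))
    -- tails
    have hT : ∑ i ∈ range n, y i - ∑ i ∈ range k, y i ≤
        ∑ i ∈ range n, x i - ∑ i ∈ range k, x i := by
      have h1 := htx k (by omega)
      have h2 := hty k (by omega)
      have : g * (∑ i ∈ range n, y i - ∑ i ∈ range k, y i) ≤
        g * (∑ i ∈ range n, x i - ∑ i ∈ range k, x i) := by linarith
      exact le_of_mul_le_mul_left this hg
    obtain ⟨r, rfl⟩ : ∃ r, n = k + m + r := ⟨n - (k + m), by omega⟩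
    have hr : ∑ i ∈ range r, x (k + m + i) = ∑ i ∈ range r, y (k + m + i) := by
      apply Finset.sum_congr rfl
      intro i hi
      have := Finset.mem_range.1 hi
      exact htail _ (by omega) (by omega)
    have hmid := sound m (fun i => x (k + i)) (fun i => y (k + i))
      (fun i hi => hx _ (by omega)) (fun i hi => hy _ (by omega))
      (fun i hi => hanti (k + i) (by omega))
      (by
        intro l hl
        rcases Nat.eq_zero_or_pos l with rfl | hl0
        · simp
        have h1 := hk3 (k + l) (by omega) (by omega)
        rw [Finset.prod_range_add, Finset.prod_range_add] at h1
        have hpos : 0 < ∏ i ∈ range l, y (k + i) :=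
          Finset.prod_pos (fun i hi => hy _ (by have := Finset.mem_range.1 hi; omega))
        have h2 : (∏ i ∈ range k, y i) * ∏ i ∈ range l, x (k + i) ≤
          (∏ i ∈ range k, y i) * ∏ i ∈ range l, y (k + i) := by
          refine le_trans (mul_le_mul_of_nonneg_right hk1 ?_) h1
          exact Finset.prod_nonneg (fun i hi => (hx _ (by have := Finset.mem_range.1 hi; omega)).le)
        exact le_of_mul_le_mul_left h2 hyk)
      (by
        rw [Finset.sum_range_add, Finset.sum_range_add, Finset.sum_range_add _ (k + m),
          Finset.sum_range_add] at hT
        linarith)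
    refine ih k (by omega) (by omega) ?_ ?_
    · rw [Finset.prod_range_add, Finset.prod_range_add] at hprod
      have he : ∏ i ∈ range m, x (k + i) = ∏ i ∈ range m, y (k + i) :=
        Finset.prod_congr rfl (fun i hi => hmid i (Finset.mem_range.1 hi))
      rw [he] at hprod
      have hpos : 0 < ∏ i ∈ range m, y (k + i) :=
        Finset.prod_pos (fun i hi => hy _ (by have := Finset.mem_range.1 hi; omega))
      exact le_of_mul_le_mul_right hprod hpos
    · intro i hi hki
      rcases lt_or_ge i (k + m) with h | h
      · have := hmid (i - k) (by omega)
        simpa [show k + (i - k) = i by omega] using this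
      · exact htail i hi h

/-! ### Part 2: Sylvester sequences -/

lemma sylv_pos (g k : ℕ) : 1 ≤ sylv g (k + 1) := by
  cases k with
  | zero => simp [sylv]
  | succ k => simp [sylv]

lemma sylv_eq (g k : ℕ) : sylv g (k + 1) = tsylv g (k + 1) + 1 := by
  have := sylv_pos g k
  unfold tsylv; omega

lemma tsylv_one (g : ℕ) : tsylv g 1 = g := by simp [tsylv, sylv]

lemma tsylv_succ (g k : ℕ) : tsylv g (k + 2) = sylv g (k + 1) * tsylv g (k + 1) := by
  simp [tsylv, sylv]

lemma tsylv_pos (g k : ℕ) (hg : 1 ≤ g) : 1 ≤ tsylv g (k + 1) := by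
  induction k with
  | zero => simpa [tsylv_one] using hg
  | succ k ih => rw [tsylv_succ]; exact Nat.mul_pos (sylv_pos g k) ih

lemma prod_sylv (g N : ℕ) : (∏ i ∈ range N, sylv g (i + 1)) * g = tsylv g (N + 1) := by
  induction N with
  | zero => simp [tsylv_one]
  | succ N ih => rw [Finset.prod_range_succ, tsylv_succ, ← ih]; ring

lemma sum_sylv {K : Type*} [Field K] [CharZero K] (g N : ℕ) (hg : 1 ≤ g) :
    ∑ i ∈ range N, (1 : K) / (sylv g (i + 1) : K) = 1 / (g : K) - 1 / (tsylv g (N + 1) : K) := by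
  induction N with
  | zero => simp [tsylv_one]
  | succ N ih =>
    have h1 : (tsylv g (N + 1) : K) ≠ 0 := by
      have := tsylv_pos g N hg; exact_mod_cast (by omega : tsylv g (N + 1) ≠ 0)
    have h2 : (sylv g (N + 1) : K) ≠ 0 := by
      have := sylv_pos g N; exact_mod_cast (by omega : sylv g (N + 1) ≠ 0)
    rw [Finset.sum_range_succ, ih, tsylv_succ]
    have h3 : (sylv g (N + 1) : K) = tsylv g (N + 1) + 1 := by rw [sylv_eq]; push_cast; ring
    push_cast
    have hg' : (g : K) ≠ 0 := by exact_mod_cast (by omega : g ≠ 0)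
    field_simp
    rw [h3]; ring

/-- The extremal sequence of unit fractions. -/
noncomputable def ysyl (g N : ℕ) (i : ℕ) : ℝ :=
  if i < N then 1 / (sylv g (i + 1) : ℝ) else 1 / (tsylv g (N + 1) : ℝ)

lemma ysyl_pos (g N i : ℕ) (hg : 1 ≤ g) : 0 < ysyl g N i := by
  unfold ysyl
  have := tsylv_pos g N hg
  have := sylv_pos g i
  split_ifs <;> positivity

lemma ysyl_prod (g N : ℕ) (hg : 1 ≤ g) (k : ℕ) (hk : k ≤ N) :
    ∏ i ∈ range k, ysyl g N i = g / (tsylv g (k + 1) : ℝ) := by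
  have h : ∏ i ∈ range k, ysyl g N i = ∏ i ∈ range k, (1 / (sylv g (i + 1) : ℝ)) := by
    apply Finset.prod_congr rfl
    intro i hi
    have := Finset.mem_range.1 hi
    simp [ysyl, show i < N by omega]
  rw [h, Finset.prod_div_distrib, ← prod_sylv]
  have hp : (∏ i ∈ range k, (sylv g (i + 1) : ℝ)) ≠ 0 := by
    rw [Finset.prod_ne_zero_iff]
    intro i _
    have := sylv_pos g i
    positivity
  have : (g : ℝ) ≠ 0 := by positivity
  push_cast
  simp
  field_simp

lemma ysyl_sum (g N : ℕ) (hg : 1 ≤ g) (k : ℕ) (hk : k ≤ N) :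
    ∑ i ∈ range k, ysyl g N i = 1 / (g : ℝ) - 1 / (tsylv g (k + 1) : ℝ) := by
  rw [← sum_sylv g k hg]
  apply Finset.sum_congr rfl
  intro i hi
  have := Finset.mem_range.1 hi
  simp [ysyl, show i < N by omega]

lemma ysyl_sum_all (g N : ℕ) (hg : 1 ≤ g) :
    ∑ i ∈ range (N + 1), ysyl g N i = 1 / (g : ℝ) := by
  rw [Finset.sum_range_succ, ysyl_sum g N hg N le_rfl]
  simp [ysyl]

lemma ysyl_prod_all (g N : ℕ) (hg : 1 ≤ g) :
    ∏ i ∈ range (N + 1), ysyl g N i = g / (tsylv g (N + 1) : ℝ) ^ 2 := by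
  rw [Finset.prod_range_succ, ysyl_prod g N hg N le_rfl]
  simp [ysyl]
  have := tsylv_pos g N hg
  field_simp

lemma prod_range_fin (n k : ℕ) (hk : k ≤ n) (F : ℕ → ℝ) (f : Fin n → ℝ)
    (hF : ∀ i : Fin n, F i = f i) :
    ∏ i ∈ range k, F i = ∏ i ∈ univ.filter (fun i : Fin n => i.val < k), f i := by
  symm
  apply Finset.prod_bij (fun (i : Fin n) _ => i.val)
  · intro a ha; simpa using ha
  · intro a _ b _ h; exact Fin.ext h
  · intro b hb
    have := Finset.mem_range.1 hb
    exact ⟨⟨b, by omega⟩, by simpa using this, rfl⟩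
  · intro a _; exact (hF a).symm

lemma sum_range_fin (n k : ℕ) (hk : k ≤ n) (F : ℕ → ℝ) (f : Fin n → ℝ)
    (hF : ∀ i : Fin n, F i = f i) :
    ∑ i ∈ range k, F i = ∑ i ∈ univ.filter (fun i : Fin n => i.val < k), f i := by
  symm
  apply Finset.sum_bij (fun (i : Fin n) _ => i.val)
  · intro a ha; simpa using ha
  · intro a _ b _ h; exact Fin.ext h
  · intro b hb
    have := Finset.mem_range.1 hb
    exact ⟨⟨b, by omega⟩, by simpa using this, rfl⟩
  · intro a _; exact (hF a).symm

lemma ik_fin (N g : ℕ) (hg : 1 ≤ g) (x : Fin (N + 1) → ℝ) (hx : ∀ i, 0 < x i)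
    (hsum : ∑ i, x i = 1 / (g : ℝ))
    (hI : ∀ I : Finset (Fin (N + 1)), I ≠ univ → ∏ i ∈ I, x i ≤ g * ∑ i ∈ Iᶜ, x i)
    (hp : ∏ i, x i ≤ g / (tsylv g (N + 1) : ℝ) ^ 2) :
    ∃ σ : Equiv.Perm (Fin (N + 1)), ∀ k, x (σ k) = ysyl g N k.val := by
  let σ := Tuple.sort (fun i => - x i)
  have hmono : Monotone ((fun i => - x i) ∘ σ) := Tuple.monotone_sort _
  refine ⟨σ, ?_⟩
  let X : ℕ → ℝ := fun i => if h : i < N + 1 then x (σ ⟨i, h⟩) else 0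
  have hX : ∀ i : Fin (N + 1), X i = x (σ i) := by
    intro i; simp only [X, i.2, dif_pos]
  have hgpos : (0 : ℝ) < g := by positivity
  have hXs : ∑ i ∈ range (N + 1), X i = 1 / (g : ℝ) := by
    rw [← hsum, ← Equiv.sum_comp σ, ← Fin.sum_univ_eq_sum_range]
    exact Finset.sum_congr rfl (fun i _ => hX i)
  have hXp : ∏ i ∈ range (N + 1), X i = ∏ i, x i := by
    rw [← Equiv.prod_comp σ, ← Fin.prod_univ_eq_prod_range]
    exact Finset.prod_congr rfl (fun i _ => hX i)
  have main := comparison (N + 1) g hgpos X (ysyl g N)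
    (fun i hi => by simp only [X, hi, dif_pos]; exact hx _) (fun i _ => ysyl_pos g N i hg)
    (fun i hi => by
      have h1 := hmono (show (⟨i, by omega⟩ : Fin (N + 1)) ≤ ⟨i + 1, hi⟩ by
        simp [Fin.le_def])
      simp only [Function.comp] at h1
      simp only [X, hi, show i < N + 1 by omega, dif_pos]
      linarith)
    (fun k hk => by
      have h1 := hI ((univ.filter (fun i : Fin (N + 1) => i.val < k)).map σ.toEmbedding) (by
        intro h
        have h2 : σ ⟨k, hk⟩ ∈ (univ.filter (fun i : Fin (N + 1) => i.val < k)).map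
          σ.toEmbedding := by rw [h]; simp
        simp at h2)
      have h2 := Finset.sum_add_sum_compl
        ((univ.filter (fun i : Fin (N + 1) => i.val < k)).map σ.toEmbedding) x
      rw [hsum, Finset.sum_map] at h2
      rw [Finset.prod_map] at h1
      simp only [Equiv.coe_toEmbedding] at h1 h2
      rw [hXs, prod_range_fin (N + 1) k hk.le X _ hX, sum_range_fin (N + 1) k hk.le X _ hX, ← h2]
      simpa using h1)
    (fun k hk => by
      rw [ysyl_sum_all g N hg, ysyl_sum g N hg k (by omega), ysyl_prod g N hg k (by omega)]
      ring)
    (N + 1) le_rfl (by rw [hXp, ysyl_prod_all g N hg]; exact hp)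
    (fun i h1 h2 => by omega)
  intro k
  rw [← hX]
  exact main k k.2

lemma int_denom {ι : Type*} [DecidableEq ι] (a : ι → ℕ) (ha : ∀ i, 0 < a i) (I : Finset ι) :
    ∃ z : ℤ, (∑ i ∈ I, (1 : ℝ) / a i) * ∏ i ∈ I, (a i : ℝ) = z := by
  induction I using Finset.induction_on with
  | empty => exact ⟨0, by simp⟩
  | insert j I hj ih =>
    obtain ⟨z, hz⟩ := ih
    refine ⟨∏ i ∈ I, (a i : ℤ) + a j * z, ?_⟩
    rw [Finset.sum_insert hj, Finset.prod_insert hj]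
    push_cast
    rw [← hz]
    have : (a j : ℝ) ≠ 0 := by have := ha j; positivity
    field_simp

/-! ### Part 3: the sharp bound for unit fraction partitions -/

/-- The subset inequalities for the merged partition. -/
lemma merged_ineq (N g : ℕ) (hN : 1 ≤ N) (hg : 1 ≤ g) (hNg : ¬(N = 1 ∧ g = 1))
    (a : Fin (N + 1) → ℕ) (c : ℕ) (ha : ∀ i, 0 < a i) (hc : 0 < c)
    (hsum : ∑ i, (1 : ℝ) / a i + 1 / c = 1 / g)
    (f : Fin (N + 1)) (hf : ∀ i, a i ≤ a f) (hfc : a f ≤ c)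
    (x : Fin (N + 1) → ℝ) (hxf : x f = 1 / a f + 1 / c) (hx : ∀ i, i ≠ f → x i = 1 / a i)
    (I : Finset (Fin (N + 1))) (hI : I ≠ univ) : ∏ i ∈ I, x i ≤ g * ∑ i ∈ Iᶜ, x i := by
  have hgpos : (0 : ℝ) < g := by positivity
  have hapos : ∀ i, (0 : ℝ) < a i := fun i => by have := ha i; positivity
  have hcpos : (0 : ℝ) < c := by positivity
  have hxpos : ∀ i, 0 < x i := by
    intro i
    have := hapos i
    by_cases h : i = f
    · rw [h] at this ⊢
      rw [hxf]; positivity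
    · rw [hx i h]; positivity
  have hxsum : ∑ i, x i = 1 / g := by
    rw [← hsum, ← Finset.add_sum_erase univ x (mem_univ f),
      ← Finset.add_sum_erase univ (fun i => (1 : ℝ) / a i) (mem_univ f), hxf,
      Finset.sum_congr rfl (fun i hi => hx i (Finset.ne_of_mem_erase hi))]
    ring
  have hne : (Iᶜ).Nonempty := by
    rw [Finset.nonempty_iff_ne_empty]
    intro h
    exact hI (by simpa using h)
  have hCpos : 0 < ∑ i ∈ Iᶜ, x i := Finset.sum_pos (fun i _ => hxpos i) hne
  by_cases hfI : f ∈ I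
  · -- the merged element belongs to `I`
    have hXle : x f ≤ 2 * (1 / a f) := by
      have : (1 : ℝ) / c ≤ 1 / a f := by
        apply one_div_le_one_div_of_le (hapos f); exact_mod_cast hfc
      rw [hxf]; linarith
    have hterm : ∀ i ∈ Iᶜ, (1 : ℝ) / a f ≤ x i := by
      intro i hi
      have hif : i ≠ f := by
        rintro rfl
        exact (Finset.mem_compl.1 hi) hfI
      rw [hx i hif]
      apply one_div_le_one_div_of_le (hapos i); exact_mod_cast hf i
    have hcard : ((Iᶜ).card : ℝ) * (1 / a f) ≤ ∑ i ∈ Iᶜ, x i := by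
      have := Finset.card_nsmul_le_sum Iᶜ x _ hterm
      simpa using this
    have haf : (0 : ℝ) < 1 / a f := by have := hapos f; positivity
    have h1card : (1 : ℝ) ≤ (Iᶜ).card := by exact_mod_cast hne.card_pos
    have hle : ∀ i ∈ I.erase f, x i ≤ 1 / 2 := by
      intro i hi
      have hif := Finset.ne_of_mem_erase hi
      have h1 : x i + x f ≤ 1 / g := by
        rw [← hxsum, ← Finset.sum_pair hif]
        exact Finset.sum_le_sum_of_subset_of_nonneg (Finset.subset_univ _)
          (fun j _ _ => (hxpos j).le)
      have h2 : (1 : ℝ) / g ≤ 1 := by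
        rw [div_le_one hgpos]; exact_mod_cast hg
      have h3 := hxpos f
      rw [hx i hif] at h1 ⊢
      have h4 : (1 : ℝ) / a i < 1 := by linarith
      rw [div_lt_one (hapos i)] at h4
      have h5 : 1 < a i := by exact_mod_cast h4
      apply one_div_le_one_div_of_le (by norm_num); exact_mod_cast h5
    rw [← Finset.mul_prod_erase I x hfI]
    have hxf0 := hxpos f
    by_cases hemp : (I.erase f).Nonempty
    · have hprod : ∏ i ∈ I.erase f, x i ≤ 1 / 2 := by
        obtain ⟨j, hj⟩ := hemp
        rw [← Finset.mul_prod_erase _ x hj]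
        have h1 : ∏ i ∈ (I.erase f).erase j, x i ≤ 1 :=
          Finset.prod_le_one (fun i _ => (hxpos i).le)
            (fun i hi => by have := hle i (Finset.mem_of_mem_erase hi); linarith)
        have h2 := hle j hj
        have h3 := hxpos j
        have h4 := mul_le_mul_of_nonneg_left h1 h3.le
        linarith
      have h1 := mul_le_mul_of_nonneg_left hprod hxf0.le
      have h2 : (1 : ℝ) ≤ g := by exact_mod_cast hg
      have h3 := mul_le_mul_of_nonneg_right h2 hCpos.le
      have h4 := mul_le_mul_of_nonneg_right h1card haf.le
      linarith
    · rw [Finset.not_nonempty_iff_eq_empty] at hemp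
      rw [hemp, Finset.prod_empty, mul_one]
      by_cases hg2 : 2 ≤ g
      · have h2 : (2 : ℝ) ≤ g := by exact_mod_cast hg2
        have h3 := mul_le_mul_of_nonneg_right h2 hCpos.le
        have h4 := mul_le_mul_of_nonneg_right h1card haf.le
        linarith
      · have hg1 : g = 1 := by omega
        have hN2 : 2 ≤ N := by omega
        have hIf : I = {f} := by
          rw [← Finset.insert_erase hfI, hemp]; rfl
        have hc2 : (2 : ℝ) ≤ (Iᶜ).card := by
          rw [hIf, Finset.card_compl]
          simp
          exact_mod_cast hN2
        have h4 := mul_le_mul_of_nonneg_right hc2 haf.le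
        rw [hg1]; push_cast
        linarith
  · have hprod : ∏ i ∈ I, x i = ∏ i ∈ I, ((1 : ℝ) / a i) :=
      Finset.prod_congr rfl (fun i hi => hx i (by rintro rfl; exact hfI hi))
    have hs : ∑ i ∈ I, x i = ∑ i ∈ I, ((1 : ℝ) / a i) :=
      Finset.sum_congr rfl (fun i hi => hx i (by rintro rfl; exact hfI hi))
    have hC : ∑ i ∈ Iᶜ, x i = 1 / g - ∑ i ∈ I, ((1 : ℝ) / a i) := by
      rw [← hs, ← hxsum, ← Finset.sum_add_sum_compl I x]; ring
    rw [hC] at hCpos ⊢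
    obtain ⟨z, hz⟩ := int_denom a ha I
    have hP : 0 < ∏ i ∈ I, (a i : ℝ) := Finset.prod_pos (fun i _ => hapos i)
    rw [hprod, Finset.prod_div_distrib, Finset.prod_const_one, div_le_iff₀ hP]
    have e1 : (g : ℝ) * (1 / g - ∑ i ∈ I, (1 : ℝ) / a i) * ∏ i ∈ I, (a i : ℝ) =
        (((∏ i ∈ I, (a i : ℤ)) - g * z : ℤ) : ℝ) := by
      push_cast
      rw [← hz]
      field_simp
    have e2 : 0 < (g : ℝ) * (1 / g - ∑ i ∈ I, (1 : ℝ) / a i) * ∏ i ∈ I, (a i : ℝ) := by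
      positivity
    rw [e1] at e2 ⊢
    have : (0 : ℤ) < (∏ i ∈ I, (a i : ℤ)) - g * z := by exact_mod_cast e2
    exact_mod_cast this

lemma sylv_mono (g k : ℕ) (hg : 1 ≤ g) : sylv g (k + 1) ≤ sylv g (k + 2) := by
  have h1 := tsylv_pos g k hg
  have h2 := sylv_eq g k
  have h3 := sylv_eq g (k + 1)
  have h4 := tsylv_succ g k
  rw [h3, h4]
  nlinarith [sylv_pos g k]

lemma sylv_mono' (g : ℕ) (hg : 1 ≤ g) : Monotone (fun k => sylv g (k + 1)) :=
  monotone_nat_of_le_succ (fun k => sylv_mono g k hg)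

lemma small_case (N g : ℕ) (hN : 1 ≤ N) (hg : 1 ≤ g) (hNg : ¬(N = 1 ∧ g = 1)) (k : ℕ)
    (hk : k < N) (h : tsylv g (N + 1) ≤ 2 * sylv g (k + 1)) :
    (N = 1 ∧ g = 2 ∧ k = 0) ∨ (N = 2 ∧ g = 1 ∧ k = 1) := by
  obtain ⟨M, rfl⟩ : ∃ M, N = M + 1 := ⟨N - 1, by omega⟩
  have h1 : sylv g (k + 1) ≤ sylv g (M + 1) := sylv_mono' g hg (by omega : k ≤ M)
  rw [tsylv_succ] at h
  have h2 := sylv_pos g M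
  have h3 : tsylv g (M + 1) ≤ 2 := by
    by_contra hcon
    have : sylv g (M + 1) * 3 ≤ sylv g (M + 1) * tsylv g (M + 1) := Nat.mul_le_mul_left _ (by omega)
    omega
  have h4 : sylv g (M + 1) ≤ 3 := by rw [sylv_eq]; omega
  rcases M with _ | _ | M
  · simp [sylv] at h4
    left
    omega
  · have hg1 : g = 1 := by
      simp [sylv] at h4
      nlinarith
    subst hg1
    right
    refine ⟨rfl, rfl, ?_⟩
    by_contra hk1
    have : k = 0 := by omega
    subst this
    simp [sylv, tsylv] at h
  · have h5 : sylv g 3 ≤ sylv g (M + 2 + 1) := sylv_mono' g hg (by omega : 2 ≤ M + 2)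
    have h6 : 7 ≤ sylv g 3 := by
      simp [sylv]
      have : 2 ≤ (g + 1) * g := by nlinarith
      nlinarith
    have h7 : sylv g (M + 2 + 1) ≤ 3 := h4
    omega

/-- The sharp bound: the extremal cases. -/
lemma unit_fraction_extremal (N g : ℕ) (hN : 1 ≤ N) (hg : 1 ≤ g) (hNg : ¬(N = 1 ∧ g = 1))
    (a : Fin (N + 1) → ℕ) (c : ℕ) (ha : ∀ i, 0 < a i) (hc : 0 < c)
    (hsum : ∑ i, (1 : ℝ) / a i + 1 / c = 1 / g) (hmax : ∀ i, a i ≤ c)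
    (hbig : 2 * tsylv g (N + 1) ^ 2 ≤ g * ∏ i, a i) :
    g * ∏ i, a i = 2 * tsylv g (N + 1) ^ 2 ∧ ∃ σ : Equiv.Perm (Fin (N + 1)),
      (c = 2 * tsylv g (N + 1) ∧ a (σ (Fin.last N)) = 2 * tsylv g (N + 1) ∧
        ∀ k : Fin N, a (σ k.castSucc) = sylv g (k.val + 1)) ∨
      (N = 1 ∧ g = 2 ∧ c = 6 ∧ ∀ k, a k = 6) ∨
      (N = 2 ∧ g = 1 ∧ c = 6 ∧ ∀ k, a (σ k) = if k.val = 0 then 2 else 6) := by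
  obtain ⟨f, hf⟩ : ∃ f, ∀ i, a i ≤ a f := by
    obtain ⟨f, -, hf⟩ := Finset.exists_max_image univ a ⟨0, mem_univ _⟩
    exact ⟨f, fun i => hf i (mem_univ i)⟩
  have hgpos : (0 : ℝ) < g := by positivity
  have hapos : ∀ i, (0 : ℝ) < a i := fun i => by have := ha i; positivity
  have hcpos : (0 : ℝ) < c := by positivity
  have haf := hapos f
  let x : Fin (N + 1) → ℝ := fun i => if i = f then 1 / a f + 1 / c else 1 / a i
  have hxf : x f = 1 / a f + 1 / c := by simp [x]
  have hx : ∀ i, i ≠ f → x i = 1 / a i := by intro i hi; simp [x, hi]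
  have hxsum : ∑ i, x i = 1 / g := by
    rw [← hsum, ← Finset.add_sum_erase univ x (mem_univ f),
      ← Finset.add_sum_erase univ (fun i => (1 : ℝ) / a i) (mem_univ f), hxf,
      Finset.sum_congr rfl (fun i hi => hx i (Finset.ne_of_mem_erase hi))]
    ring
  have hxpos : ∀ i, 0 < x i := by
    intro i
    have := hapos i
    by_cases h : i = f
    · rw [h, hxf]; positivity
    · rw [hx i h]; positivity
  have hB : 0 < ∏ i, (a i : ℝ) := Finset.prod_pos (fun i _ => hapos i)
  have hprod : (∏ i, x i) * ∏ i, (a i : ℝ) = 1 + a f / c := by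
    rw [← Finset.prod_mul_distrib, ← Finset.mul_prod_erase univ _ (mem_univ f), hxf,
      Finset.prod_eq_one]
    · field_simp
    · intro i hi
      have := hapos i
      rw [hx i (Finset.ne_of_mem_erase hi)]
      field_simp
  have hT : (0 : ℝ) < tsylv g (N + 1) := by have := tsylv_pos g N hg; positivity
  have hfc : (a f : ℝ) / c ≤ 1 := by
    rw [div_le_one hcpos]; exact_mod_cast hmax f
  have hbig' : 2 * (tsylv g (N + 1) : ℝ) ^ 2 ≤ g * ∏ i, (a i : ℝ) := by exact_mod_cast hbig
  have hp : ∏ i, x i ≤ g / (tsylv g (N + 1) : ℝ) ^ 2 := by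
    rw [le_div_iff₀ (by positivity)]
    have h1 : (∏ i, x i) * (∏ i, (a i : ℝ)) ≤ 2 := by linarith
    have h2 : 0 < ∏ i, x i := Finset.prod_pos (fun i _ => hxpos i)
    have h3 := mul_le_mul_of_nonneg_left hbig' h2.le
    have h4 := mul_le_mul_of_nonneg_left h1 hgpos.le
    nlinarith
  obtain ⟨σ, hσ⟩ := ik_fin N g hg x hxpos hxsum
    (merged_ineq N g hN hg hNg a c ha hc hsum f hf (hmax f) x hxf hx) hp
  have hpe : ∏ i, x i = g / (tsylv g (N + 1) : ℝ) ^ 2 := by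
    rw [← ysyl_prod_all g N hg, ← Fin.prod_univ_eq_prod_range, ← Equiv.prod_comp σ]
    exact Finset.prod_congr rfl (fun i _ => hσ i)
  have hfc1 : (a f : ℝ) / c = 1 := by
    apply le_antisymm hfc
    rw [hpe] at hprod
    have : g / (tsylv g (N + 1) : ℝ) ^ 2 * ∏ i, (a i : ℝ) =
      (g * ∏ i, (a i : ℝ)) / (tsylv g (N + 1) : ℝ) ^ 2 := by ring
    rw [this] at hprod
    have : 2 ≤ (g * ∏ i, (a i : ℝ)) / (tsylv g (N + 1) : ℝ) ^ 2 := by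
      rw [le_div_iff₀ (by positivity)]; exact hbig'
    linarith
  have heq : (g : ℝ) * ∏ i, (a i : ℝ) = 2 * (tsylv g (N + 1) : ℝ) ^ 2 := by
    rw [hpe, hfc1] at hprod
    field_simp at hprod
    linarith
  have hac : a f = c := by
    rw [div_eq_one_iff_eq hcpos.ne'] at hfc1
    exact_mod_cast hfc1
  refine ⟨by exact_mod_cast heq, ?_⟩
  have inv_eq : ∀ p q : ℕ, (1 : ℝ) / p = 1 / q → p = q := by
    intro p q h
    have := inv_injective (by simpa using h : (p : ℝ)⁻¹ = (q : ℝ)⁻¹)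
    exact_mod_cast this
  -- values away from the merged index
  have hval : ∀ k : Fin (N + 1), σ k ≠ f →
      a (σ k) = if k.val < N then sylv g (k.val + 1) else tsylv g (N + 1) := by
    intro k hk
    have h1 := hσ k
    rw [hx _ hk] at h1
    unfold ysyl at h1
    split_ifs at h1 ⊢
    · exact inv_eq _ _ h1
    · exact inv_eq _ _ h1
  have hvalf : ∀ k : Fin (N + 1), σ k = f →
      c = 2 * if k.val < N then sylv g (k.val + 1) else tsylv g (N + 1) := by
    intro k hk
    have h1 := hσ k
    rw [hk, hxf, hac] at h1
    unfold ysyl at h1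
    have h2 : (1 : ℝ) / c + 1 / c = 2 / c := by ring
    rw [h2] at h1
    split_ifs at h1 ⊢
    · have := sylv_pos g k.val
      have h3 : (0 : ℝ) < sylv g (k.val + 1) := by positivity
      rw [div_eq_div_iff hcpos.ne' h3.ne'] at h1
      have : 2 * sylv g (k.val + 1) = 1 * c := by exact_mod_cast h1
      omega
    · rw [div_eq_div_iff hcpos.ne' hT.ne'] at h1
      have : 2 * tsylv g (N + 1) = 1 * c := by exact_mod_cast h1
      omega
  by_cases hlast : σ (Fin.last N) = f
  · refine ⟨σ, Or.inl ?_⟩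
    have h1 := hvalf _ hlast
    simp at h1
    refine ⟨h1, by rw [hlast, hac, h1], ?_⟩
    intro k
    have h2 := hval k.castSucc (by
      intro h
      rw [← hlast] at h
      exact (Fin.castSucc_lt_last k).ne (σ.injective h))
    simpa using h2
  · have h1 := hval _ hlast
    simp at h1
    obtain ⟨k, hk⟩ : ∃ k, σ k = f := σ.surjective f
    have hkN : k.val < N := by
      have : k ≠ Fin.last N := by rintro rfl; exact hlast hk
      have h2 : k.val ≠ N := fun h => this (Fin.ext h)
      omega
    have h2 := hvalf k hk
    rw [if_pos hkN] at h2
    have h3 := hf (σ (Fin.last N))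
    rw [h1, hac, h2] at h3
    rcases small_case N g hN hg hNg k.val hkN h3 with ⟨rfl, rfl, hk0⟩ | ⟨rfl, rfl, hk1⟩
    · refine ⟨σ, Or.inr (Or.inl ⟨rfl, rfl, ?_, ?_⟩)⟩
      · rw [h2, hk0]; rfl
      · intro j
        obtain ⟨i, rfl⟩ := σ.surjective j
        by_cases hi : σ i = f
        · rw [hi, hac, h2, hk0]; rfl
        · have h4 := hval i hi
          have : i.val ≠ k.val := by
            intro h; exact hi (by rw [Fin.ext h]; exact hk)
          rw [h4, if_neg (by omega)]; rfl
    · refine ⟨σ, Or.inr (Or.inr ⟨rfl, rfl, ?_, ?_⟩)⟩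
      · rw [h2, hk1]; rfl
      · intro i
        by_cases hi : σ i = f
        · have : i = k := σ.injective (hi.trans hk.symm)
          rw [hi, hac, h2, this, hk1]; rfl
        · have h4 := hval i hi
          have : i.val ≠ k.val := by
            intro h; exact hi (by rw [Fin.ext h]; exact hk)
          have h5 := i.2
          rw [h4]
          rcases (by omega : i.val = 0 ∨ i.val = 2) with h6 | h6
          · rw [h6]; rfl
          · rw [h6]; rfl

/-! ### Part 4: determinants -/

/-- The matrix with rows `(1, v_i)`. -/
def bmat {d : ℕ} (v : Fin (d + 1) → Fin d → ℚ) : Matrix (Fin (d + 1)) (Fin (d + 1)) ℚ :=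
  Matrix.of fun i => Fin.cons 1 (v i)

lemma normVol_eq {d : ℕ} (v : Fin (d + 1) → Fin d → ℚ) : normVol v = |(bmat v).det| := by
  let B' : Matrix (Fin (d + 1)) (Fin (d + 1)) ℚ :=
    Matrix.of fun i j => bmat v i j - (if i = 0 then 0 else 1) * bmat v 0 j
  have h1 : (bmat v).det = B'.det := by
    apply Matrix.det_eq_of_forall_row_eq_smul_add_const (fun i => if i = 0 then 0 else 1) 0
    · simp
    · intro i j
      simp [B']
  rw [h1, Matrix.det_succ_column_zero, Fin.sum_univ_succ]
  unfold normVol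
  have h2 : ∀ i : Fin d, B' i.succ 0 = 0 := by
    intro i; simp [B', bmat]
  have h3 : B' 0 0 = 1 := by simp [B', bmat]
  simp only [h2, h3]
  simp only [Fin.val_zero, pow_zero, mul_one, one_mul, mul_zero, zero_mul, Finset.sum_const_zero,
    add_zero]
  congr 2
  ext i j
  simp [B', bmat, Matrix.submatrix]

lemma facet_det {d : ℕ} (v : Fin (d + 1) → Fin d → ℚ) (w : Fin (d + 1) → ℚ)
    (hw : ∑ i, w i = 1) (hwv : ∀ j, ∑ i, w i * v i j = 0) (e : Fin (d + 1)) (hwe : 0 < w e) :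
    |(Matrix.of fun j : Fin d => v (e.succAbove j)).det| = w e * normVol v := by
  have h00 : w e * normVol v = |w e * (bmat v).det| := by
    rw [normVol_eq, abs_mul, abs_of_pos hwe]
  rw [h00]
  have h := Matrix.det_updateRow_sum (bmat v) e w
  rw [smul_eq_mul] at h
  rw [← h, Matrix.det_succ_row _ e, Fin.sum_univ_succ]
  have h0 : ∀ j : Fin d, (Matrix.updateRow (bmat v) e (∑ k, w k • bmat v k)) e j.succ = 0 := by
    intro j
    rw [Matrix.updateRow_self]
    simp [bmat, Finset.sum_apply, hwv]
  have h1 : (Matrix.updateRow (bmat v) e (∑ k, w k • bmat v k)) e 0 = 1 := by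
    rw [Matrix.updateRow_self]
    simp [bmat, Finset.sum_apply, hw]
  simp only [h0, h1]
  simp only [mul_one, mul_zero, zero_mul, Finset.sum_const_zero, add_zero, abs_mul, abs_pow,
    abs_neg, abs_one, one_pow, one_mul]
  congr 2
  ext i j
  simp [bmat, Matrix.submatrix, Fin.succAbove_ne]

lemma bmat_det_ne {d : ℕ} (v : Fin (d + 1) → Fin d → ℚ) (h : AffineIndependent ℚ v) :
    (bmat v).det ≠ 0 := by
  intro h0
  obtain ⟨c, hc, hcv⟩ := Matrix.exists_vecMul_eq_zero_iff.2 h0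
  apply hc
  have h1 : ∑ i, c i = 0 := by
    have := congrFun hcv 0
    simpa [Matrix.vecMul, dotProduct, bmat] using this
  have h2 : ∑ i, c i • v i = 0 := by
    funext j
    have := congrFun hcv j.succ
    simpa [Matrix.vecMul, dotProduct, bmat, Finset.sum_apply] using this
  funext i
  exact (affineIndependent_iff.1 h) univ c h1 h2 i (mem_univ i)

lemma normVol_pos {d : ℕ} (v : Fin (d + 1) → Fin d → ℚ) (h : AffineIndependent ℚ v) :
    0 < normVol v := by
  rw [normVol_eq]; exact abs_pos.2 (bmat_det_ne v h)

/-! ### Part 5: dual vertices -/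

lemma mem_dual_iff {d : ℕ} (v : Fin (d + 1) → Fin d → ℚ) (u : Fin d → ℚ) :
    u ∈ dualBody (simplexHull v) ↔ ∀ i, -1 ≤ u ⬝ᵥ v i := by
  constructor
  · intro h i
    exact h (v i) (subset_convexHull ℚ _ ⟨i, rfl⟩)
  · intro h x hx
    have hconv : Convex ℚ {x : Fin d → ℚ | -1 ≤ u ⬝ᵥ x} := by
      intro a ha b hb p q hp hq hpq
      simp only [Set.mem_ofPred_eq] at *
      rw [dotProduct_add, dotProduct_smul, dotProduct_smul, smul_eq_mul, smul_eq_mul]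
      nlinarith
    have : simplexHull v ⊆ {x : Fin d → ℚ | -1 ≤ u ⬝ᵥ x} :=
      convexHull_min (by rintro _ ⟨i, rfl⟩; exact h i) hconv
    exact this hx

lemma mem_smul_dual_iff {d : ℕ} (v : Fin (d + 1) → Fin d → ℚ) (g : ℕ) (hg : 0 < g)
    (u : Fin d → ℚ) :
    u ∈ (g : ℚ) • dualBody (simplexHull v) ↔ ∀ i, -(g : ℚ) ≤ u ⬝ᵥ v i := by
  have hg' : (0 : ℚ) < g := by exact_mod_cast hg
  rw [Set.mem_smul_set_iff_inv_smul_mem₀ hg'.ne', mem_dual_iff]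
  refine forall_congr' fun i => ?_
  rw [smul_dotProduct, smul_eq_mul, inv_mul_eq_div, le_div_iff₀ hg']
  simp

lemma dot_weight {d : ℕ} (v : Fin (d + 1) → Fin d → ℚ) (w : Fin (d + 1) → ℚ)
    (hwv : ∀ j, ∑ i, w i * v i j = 0) (u : Fin d → ℚ) : ∑ i, w i * (u ⬝ᵥ v i) = 0 := by
  simp only [dotProduct, Finset.mul_sum]
  rw [Finset.sum_comm]
  apply Finset.sum_eq_zero
  intro j _
  have := hwv j
  calc ∑ i, w i * (u j * v i j) = u j * ∑ i, w i * v i j := by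
        rw [Finset.mul_sum]; exact Finset.sum_congr rfl (fun i _ => by ring)
    _ = 0 := by rw [this, mul_zero]

/-- If `g • Δ*` is a lattice simplex, its vertices are integral. -/
lemma exists_dual {d : ℕ} (v : Fin (d + 1) → Fin d → ℚ) (w : Fin (d + 1) → ℚ)
    (hw0 : ∀ i, 0 < w i)
    (hw : ∑ i, w i = 1) (hwv : ∀ j, ∑ i, w i * v i j = 0) (hv : AffineIndependent ℚ v)
    (g : ℕ) (hg : 0 < g) (hL : IsLatticeSet ((g : ℚ) • dualBody (simplexHull v)))
    (i : Fin (d + 1)) :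
    ∃ u : Fin d → ℤ, ∀ j, j ≠ i → toQ u ⬝ᵥ v j = -(g : ℚ) := by
  have hg' : (0 : ℚ) < g := by exact_mod_cast hg
  let M : Matrix (Fin d) (Fin d) ℚ := Matrix.of fun j => v (i.succAbove j)
  have hM : M.det ≠ 0 := by
    rw [← abs_pos, facet_det v w hw hwv i (hw0 i)]
    exact mul_pos (hw0 i) (normVol_pos v hv)
  have hMu : IsUnit M.det := isUnit_iff_ne_zero.2 hM
  let a : Fin d → ℚ := M⁻¹.mulVec (fun _ => -(g : ℚ))
  have ha0 : M.mulVec a = fun _ => -(g : ℚ) := by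
    simp only [a, Matrix.mulVec_mulVec]
    rw [Matrix.mul_nonsing_inv _ hMu, Matrix.one_mulVec]
  have ha : ∀ j, j ≠ i → a ⬝ᵥ v j = -(g : ℚ) := by
    intro j hj
    obtain ⟨k, rfl⟩ := Fin.exists_succAbove_eq hj
    have := congrFun ha0 k
    rw [dotProduct_comm]
    exact this
  have hinj : ∀ b : Fin d → ℚ, (∀ j, j ≠ i → b ⬝ᵥ v j = -(g : ℚ)) → b = a := by
    intro b hb
    have hb0 : M.mulVec b = M.mulVec a := by
      rw [ha0]
      funext k
      have := hb (i.succAbove k) (Fin.succAbove_ne i k)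
      rw [dotProduct_comm] at this
      exact this
    have := congrArg (M⁻¹.mulVec) hb0
    rwa [Matrix.mulVec_mulVec, Matrix.mulVec_mulVec, Matrix.nonsing_inv_mul _ hMu,
      Matrix.one_mulVec, Matrix.one_mulVec] at this
  -- key formula
  have hkey : ∀ b : Fin d → ℚ,
      w i * (b ⬝ᵥ v i + g) = g - ∑ j ∈ univ.erase i, w j * (b ⬝ᵥ v j + g) := by
    intro b
    have h1 := dot_weight v w hwv b
    have h2 : ∑ j, w j * (b ⬝ᵥ v j + g) = g := by
      simp only [mul_add]
      rw [Finset.sum_add_distrib, h1, ← Finset.sum_mul, hw]; ring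
    rw [← Finset.add_sum_erase _ _ (mem_univ i)] at h2
    linarith
  have hamem : a ∈ (g : ℚ) • dualBody (simplexHull v) := by
    rw [mem_smul_dual_iff v g hg]
    intro j
    by_cases hj : j = i
    · subst hj
      have h1 := hkey a
      rw [Finset.sum_eq_zero (fun k hk => by rw [ha k (Finset.ne_of_mem_erase hk)]; ring)] at h1
      have h2 : 0 < a ⬝ᵥ v j + g := by
        have := hw0 j
        by_contra hcon
        nlinarith
      linarith
    · rw [ha j hj]
  rw [IsLatticeSet] at hL
  by_cases hallint : ∀ j, ∃ z : ℤ, a j = (z : ℚ)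
  · choose u hu using hallint
    refine ⟨u, ?_⟩
    have : toQ u = a := by funext j; exact (hu j).symm
    rw [this]; exact ha
  · exfalso
    rw [hL] at hamem
    have hsub : convexHull ℚ {x ∈ (g : ℚ) • dualBody (simplexHull v) |
        ∀ j, ∃ z : ℤ, x j = (z : ℚ)} ⊆ {x | x ⬝ᵥ v i < a ⬝ᵥ v i} := by
      apply convexHull_min
      · rintro x ⟨hx1, hx2⟩
        rw [mem_smul_dual_iff v g hg] at hx1
        simp only [Set.mem_ofPred_eq]
        by_contra hcon
        rw [not_lt] at hcon
        have h1 := hkey a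
        have h2 := hkey x
        rw [Finset.sum_eq_zero (fun k hk => by rw [ha k (Finset.ne_of_mem_erase hk)]; ring)] at h1
        have hnn : ∀ j ∈ univ.erase i, 0 ≤ w j * (x ⬝ᵥ v j + g) := fun j _ =>
          mul_nonneg (hw0 j).le (by have := hx1 j; linarith)
        have h3 := mul_le_mul_of_nonneg_left hcon (hw0 i).le
        have h4 : ∑ j ∈ univ.erase i, w j * (x ⬝ᵥ v j + g) = 0 := by
          apply le_antisymm _ (Finset.sum_nonneg hnn)
          linarith
        have h5 := (Finset.sum_eq_zero_iff_of_nonneg hnn).1 h4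
        have h6 : x = a := by
          apply hinj
          intro j hj
          have h7 := h5 j (Finset.mem_erase.2 ⟨hj, mem_univ j⟩)
          rcases mul_eq_zero.1 h7 with h8 | h8
          · exact absurd h8 (hw0 j).ne'
          · linarith
        rw [h6] at hx2
        exact hallint hx2
      · intro p hp q hq s t hs ht hst
        simp only [Set.mem_ofPred_eq] at *
        rw [add_dotProduct, smul_dotProduct, smul_dotProduct, smul_eq_mul, smul_eq_mul]
        have h1 : s * (p ⬝ᵥ v i) ≤ s * (a ⬝ᵥ v i) := mul_le_mul_of_nonneg_left hp.le hs
        have h2 : t * (q ⬝ᵥ v i) ≤ t * (a ⬝ᵥ v i) := mul_le_mul_of_nonneg_left hq.le ht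
        have h3 : s * (a ⬝ᵥ v i) + t * (a ⬝ᵥ v i) = a ⬝ᵥ v i := by rw [← add_mul, hst, one_mul]
        rcases hs.lt_or_eq with h | h
        · have := mul_lt_mul_of_pos_left hp h
          linarith
        · have ht1 : t = 1 := by linarith
          subst ht1
          rw [← h] at h3 h1 ⊢
          linarith
    have hlt : a ⬝ᵥ v i < a ⬝ᵥ v i := hsub hamem
    exact lt_irrefl _ hlt

/-- If integral dual vectors exist, then `g • Δ*` is a lattice simplex. -/
lemma lattice_of_dual {d : ℕ} (v : Fin (d + 1) → Fin d → ℚ) (w : Fin (d + 1) → ℚ)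
    (hw0 : ∀ i, 0 < w i)
    (hw : ∑ i, w i = 1) (hwv : ∀ j, ∑ i, w i * v i j = 0) (hv : AffineIndependent ℚ v)
    (g : ℕ) (hg : 0 < g) (u : Fin (d + 1) → Fin d → ℤ)
    (hu : ∀ i j, j ≠ i → toQ (u i) ⬝ᵥ v j = -(g : ℚ)) :
    IsLatticeSet ((g : ℚ) • dualBody (simplexHull v)) := by
  have hg' : (0 : ℚ) < g := by exact_mod_cast hg
  have huw : ∀ i, w i * (toQ (u i) ⬝ᵥ v i + g) = g := by
    intro i
    have h1 := dot_weight v w hwv (toQ (u i))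
    have h2 : ∑ j, w j * (toQ (u i) ⬝ᵥ v j + g) = g := by
      simp only [mul_add]
      rw [Finset.sum_add_distrib, h1, ← Finset.sum_mul, hw]; ring
    rw [← Finset.add_sum_erase _ _ (mem_univ i), Finset.sum_eq_zero (fun k hk => by
      rw [hu i k (Finset.ne_of_mem_erase hk)]; ring)] at h2
    linarith
  have humem : ∀ i, toQ (u i) ∈ (g : ℚ) • dualBody (simplexHull v) := by
    intro i
    rw [mem_smul_dual_iff v g hg]
    intro j
    by_cases hj : j = i
    · subst hj
      have h1 := huw j
      have h2 : 0 < toQ (u j) ⬝ᵥ v j + g := by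
        have := hw0 j
        by_contra hcon
        nlinarith
      linarith
    · rw [hu i j hj]
  rw [IsLatticeSet]
  apply Set.Subset.antisymm
  · intro x hx
    rw [mem_smul_dual_iff v g hg] at hx
    have hx2 : x = ∑ i, (w i * (x ⬝ᵥ v i + g) / g) • toQ (u i) := by
      have hdot : ∀ j, (∑ i, (w i * (x ⬝ᵥ v i + g) / g) • toQ (u i)) ⬝ᵥ v j = x ⬝ᵥ v j := by
        intro j
        rw [sum_dotProduct]
        simp only [smul_dotProduct, smul_eq_mul]
        have h1 : ∀ i, w i * (x ⬝ᵥ v i + g) / g * (toQ (u i) ⬝ᵥ v j) =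
            -(w i * (x ⬝ᵥ v i + g)) + (if i = j then (x ⬝ᵥ v j + g) else 0) := by
          intro i
          by_cases hij : i = j
          · subst hij
            simp only [if_true]
            have h2 := huw i
            have h3 : w i * (toQ (u i) ⬝ᵥ v i) = g - w i * g := by linarith
            calc w i * (x ⬝ᵥ v i + g) / g * (toQ (u i) ⬝ᵥ v i)
                = (x ⬝ᵥ v i + g) / g * (w i * (toQ (u i) ⬝ᵥ v i)) := by ring
              _ = _ := by rw [h3]; field_simp; ring
          · rw [hu i j (Ne.symm hij), if_neg hij]
            field_simp
            ring
        rw [Finset.sum_congr rfl (fun i _ => h1 i), Finset.sum_add_distrib, Finset.sum_ite_eq']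
        simp only [mem_univ, if_true, mul_add, neg_add]
        rw [Finset.sum_add_distrib, Finset.sum_neg_distrib, Finset.sum_neg_distrib,
          dot_weight v w hwv x, ← Finset.sum_mul, hw]
        ring
      have hM : (Matrix.of fun j : Fin d => v ((0 : Fin (d + 1)).succAbove j)).det ≠ 0 := by
        rw [← abs_pos, facet_det v w hw hwv 0 (hw0 0)]
        exact mul_pos (hw0 0) (normVol_pos v hv)
      have hMu := isUnit_iff_ne_zero.2 hM
      have hb : ∀ b c : Fin d → ℚ, (∀ j, b ⬝ᵥ v j = c ⬝ᵥ v j) → b = c := by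
        intro b c hbc
        have hb0 : (Matrix.of fun j : Fin d => v ((0 : Fin (d + 1)).succAbove j)).mulVec b =
            (Matrix.of fun j : Fin d => v ((0 : Fin (d + 1)).succAbove j)).mulVec c := by
          funext k
          have := hbc ((0 : Fin (d + 1)).succAbove k)
          rw [dotProduct_comm b, dotProduct_comm c] at this
          exact this
        have := congrArg ((Matrix.of fun j : Fin d => v ((0 : Fin (d + 1)).succAbove j))⁻¹.mulVec)
          hb0
        rwa [Matrix.mulVec_mulVec, Matrix.mulVec_mulVec, Matrix.nonsing_inv_mul _ hMu,
          Matrix.one_mulVec, Matrix.one_mulVec] at this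
      exact hb _ _ (fun j => (hdot j).symm)
    rw [hx2]
    apply (convex_convexHull ℚ _).sum_mem
    · intro i _
      have := hx i
      have h1 := hw0 i
      have h2 : 0 ≤ x ⬝ᵥ v i + g := by linarith
      positivity
    · simp only [mul_add, add_div]
      rw [Finset.sum_add_distrib, ← Finset.sum_div, ← Finset.sum_div, dot_weight v w hwv x,
        ← Finset.sum_mul, hw]
      field_simp
      ring
    · intro i _
      apply subset_convexHull
      exact ⟨humem i, fun j => ⟨u i j, rfl⟩⟩
  · apply convexHull_min
    · intro x hx; exact hx.1
    · intro p hp q hq s t hs ht hst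
      rw [mem_smul_dual_iff v g hg] at *
      intro i
      rw [add_dotProduct, smul_dotProduct, smul_dotProduct, smul_eq_mul, smul_eq_mul]
      have h1 := mul_le_mul_of_nonneg_left (hp i) hs
      have h2 := mul_le_mul_of_nonneg_left (hq i) ht
      have h3 : s * -(g : ℚ) + t * -(g : ℚ) = -g := by rw [← add_mul, hst, one_mul]
      linarith

/-! ### Part 6: consequences of the dual description -/

lemma det_D {d : ℕ} (g : ℚ) (a : Fin d → ℚ) (ha : ∀ i, a i ≠ 0) :
    (Matrix.of fun i j : Fin d => -g + if i = j then a i else 0).det =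
      (∏ i, a i) * (1 - g * ∑ i, 1 / a i) := by
  have h1 : (Matrix.of fun i j : Fin d => -g + if i = j then a i else 0) =
      Matrix.diagonal a * (1 + Matrix.replicateCol Unit (fun i => -g / a i) *
        Matrix.replicateRow Unit (fun _ => (1 : ℚ))) := by
    ext i j
    rw [Matrix.diagonal_mul]
    have := ha i
    by_cases hij : i = j
    · subst hij
      simp [Matrix.mul_apply]
      field_simp
      ring
    · simp [Matrix.mul_apply, hij]
      field_simp
  rw [h1, Matrix.det_mul, Matrix.det_diagonal, Matrix.det_one_add_replicateCol_mul_replicateRow]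
  congr 1
  simp [dotProduct, Finset.mul_sum]
  rw [sub_eq_add_neg, ← Finset.sum_neg_distrib]
  congr 1
  apply Finset.sum_congr rfl
  intro i _
  ring

/-- Integral data attached to a Fano simplex of Gorenstein index dividing `g`. -/
structure DualData {d : ℕ} (g : ℕ) (v u : Fin (d + 1) → Fin d → ℤ) (A : Fin (d + 1) → ℕ) :
    Prop where
  pair : ∀ i j, u i ⬝ᵥ v j = -(g : ℤ) + if i = j then (A i : ℤ) else 0
  pos : ∀ i, 0 < A i
  sum : ∑ i, (1 : ℚ) / A i = 1 / g
  prim : ∀ i, IsPrimitive (v i)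

lemma toQ_dot {d : ℕ} (a b : Fin d → ℤ) : toQ a ⬝ᵥ toQ b = ((a ⬝ᵥ b : ℤ) : ℚ) := by
  simp [dotProduct, toQ]

/-- A Fano simplex carries dual data, and its weights are `g / A i`. -/
lemma exists_dualData {d g : ℕ} (hg : 1 ≤ g) (v : Fin (d + 1) → Fin d → ℤ)
    (hF : IsFanoSimplex v) (hGor : gorensteinIndex (fun i => toQ (v i)) = g) :
    ∃ (u : Fin (d + 1) → Fin d → ℤ) (A : Fin (d + 1) → ℕ), DualData g v u A ∧
      ∀ e, |(Matrix.of fun j : Fin d => toQ (v (e.succAbove j))).det| =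
        (g : ℚ) / A e * normVol (fun i => toQ (v i)) := by
  obtain ⟨haff, hprim, w, hw0, hw, hwv⟩ := hF
  have hmem : 0 < g ∧ IsLatticeSet ((g : ℚ) • dualBody (simplexHull fun i => toQ (v i))) := by
    have hne : {g : ℕ | 0 < g ∧
        IsLatticeSet ((g : ℚ) • dualBody (simplexHull fun i => toQ (v i)))}.Nonempty := by
      apply Nat.nonempty_of_pos_sInf
      have : 0 < gorensteinIndex (fun i => toQ (v i)) := by omega
      exact this
    have h1 := Nat.sInf_mem hne
    have h2 : sInf {g : ℕ | 0 < g ∧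
      IsLatticeSet ((g : ℚ) • dualBody (simplexHull fun i => toQ (v i)))} = g := hGor
    rw [h2] at h1
    exact h1
  have hg' : (0 : ℚ) < g := by exact_mod_cast hg
  choose u hu using fun i => exists_dual (fun i => toQ (v i)) w hw0 hw hwv haff g hmem.1 hmem.2 i
  have huw : ∀ i, w i * (((u i ⬝ᵥ v i + g : ℤ)) : ℚ) = g := by
    intro i
    have h1 := dot_weight (fun i => toQ (v i)) w hwv (toQ (u i))
    have h2 : ∑ j, w j * (toQ (u i) ⬝ᵥ toQ (v j) + g) = g := by
      simp only [mul_add]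
      rw [Finset.sum_add_distrib, h1, ← Finset.sum_mul, hw]; ring
    rw [← Finset.add_sum_erase _ _ (mem_univ i), Finset.sum_eq_zero (fun k hk => by
      rw [hu i k (Finset.ne_of_mem_erase hk)]; ring)] at h2
    rw [toQ_dot] at h2
    push_cast
    linarith
  have hApos : ∀ i, 0 < u i ⬝ᵥ v i + g := by
    intro i
    have h1 := huw i
    have h2 := hw0 i
    by_contra hcon
    have : (((u i ⬝ᵥ v i + g : ℤ)) : ℚ) ≤ 0 := by exact_mod_cast not_lt.1 hcon
    nlinarith
  have hcast : ∀ i, (((u i ⬝ᵥ v i + g).toNat : ℕ) : ℤ) = u i ⬝ᵥ v i + g := fun i =>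
    Int.toNat_of_nonneg (hApos i).le
  have hcastQ : ∀ i, (((u i ⬝ᵥ v i + g).toNat : ℕ) : ℚ) = ((u i ⬝ᵥ v i + g : ℤ) : ℚ) := by
    intro i
    exact_mod_cast congrArg (Int.cast : ℤ → ℚ) (hcast i)
  have hwA : ∀ i, w i = g / (((u i ⬝ᵥ v i + g).toNat : ℕ) : ℚ) := by
    intro i
    rw [hcastQ, eq_div_iff, huw]
    exact_mod_cast (hApos i).ne'
  refine ⟨u, fun i => (u i ⬝ᵥ v i + g).toNat, ⟨?_, ?_, ?_, hprim⟩, ?_⟩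
  · intro i j
    by_cases hij : i = j
    · subst hij
      rw [if_pos rfl, hcast]; ring
    · rw [if_neg hij]
      have := hu i j (Ne.symm hij)
      rw [toQ_dot] at this
      rw [add_zero]
      exact_mod_cast this
  · intro i
    have := hApos i
    show 0 < (u i ⬝ᵥ v i + g).toNat
    omega
  · have h1 : ∑ i, (g : ℚ) / (((u i ⬝ᵥ v i + g).toNat : ℕ) : ℚ) = 1 := by
      rw [← hw]; exact Finset.sum_congr rfl (fun i _ => (hwA i).symm)
    rw [eq_div_iff hg'.ne', Finset.sum_mul]
    refine Eq.trans ?_ h1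
    apply Finset.sum_congr rfl
    intro i _
    ring
  · intro e
    rw [facet_det (fun i => toQ (v i)) w hw hwv e (hw0 e), hwA e]

/-- Pairing determinant. -/
lemma det_pair {d g : ℕ} (hg : 1 ≤ g) {v u : Fin (d + 1) → Fin d → ℤ} {A : Fin (d + 1) → ℕ}
    (h : DualData g v u A) (e : Fin (d + 1)) :
    ((Matrix.of fun k : Fin d => u (e.succAbove k)).det : ℚ) *
      ((Matrix.of fun k : Fin d => v (e.succAbove k)).det : ℚ) =
      (∏ k, (A (e.succAbove k) : ℚ)) * (g / A e) := by
  have hg' : (0 : ℚ) < g := by exact_mod_cast hg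
  have h1 : (Matrix.of fun k : Fin d => u (e.succAbove k)) *
      (Matrix.of fun k : Fin d => v (e.succAbove k)).transpose =
      Matrix.of fun i j : Fin d => -(g : ℤ) + if i = j then (A (e.succAbove i) : ℤ) else 0 := by
    ext i j
    have h2 := h.pair (e.succAbove i) (e.succAbove j)
    rw [Matrix.of_apply]
    simp only [(Fin.succAbove_right_injective (p := e)).eq_iff] at h2
    rw [← h2]
    rfl
  have h2 := congrArg Matrix.det h1
  rw [Matrix.det_mul, Matrix.det_transpose] at h2
  have h3 := congrArg (Int.cast : ℤ → ℚ) h2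
  rw [Int.cast_mul] at h3
  rw [h3, Int.cast_det]
  have h4 := det_D (g : ℚ) (fun i : Fin d => (A (e.succAbove i) : ℚ))
    (fun i => by have := h.pos (e.succAbove i); positivity)
  have h5 : (Matrix.of fun i j : Fin d => -(g : ℤ) + if i = j then (A (e.succAbove i) : ℤ) else 0).map
      (fun x => (x : ℚ)) =
      (Matrix.of fun i j : Fin d => -(g : ℚ) + if i = j then (A (e.succAbove i) : ℚ) else 0) := by
    ext i j
    simp only [Matrix.map_apply, Matrix.of_apply]
    push_cast
    rfl
  rw [h5, h4]
  congr 1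
  have h6 := h.sum
  rw [Fin.sum_univ_succAbove _ e] at h6
  have h7 : ∑ i : Fin d, (1 : ℚ) / A (e.succAbove i) = 1 / g - 1 / A e := by linarith
  rw [h7]
  field_simp
  ring

lemma g_dvd_det {d g : ℕ} {v u : Fin (d + 1) → Fin d → ℤ} {A : Fin (d + 1) → ℕ}
    (h : DualData g v u A) (e : Fin (d + 1)) :
    (g : ℤ) ∣ (Matrix.of fun k : Fin d => u (e.succAbove k)).det := by
  set U : Matrix (Fin d) (Fin d) ℤ := Matrix.of fun k : Fin d => u (e.succAbove k) with hU
  have h1 : U.mulVec (v e) = fun _ => -(g : ℤ) := by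
    funext k
    have := h.pair (e.succAbove k) e
    rw [if_neg (Fin.succAbove_ne e k), add_zero] at this
    exact this
  have h2 : U.adjugate.mulVec (U.mulVec (v e)) = U.det • v e := by
    rw [Matrix.mulVec_mulVec, Matrix.adjugate_mul, Matrix.smul_mulVec, Matrix.one_mulVec]
  have h3 : ∀ k, (g : ℤ) ∣ U.det * v e k := by
    intro k
    have h4 := congrFun h2 k
    rw [h1] at h4
    simp only [Pi.smul_apply, smul_eq_mul] at h4
    rw [← h4]
    rw [Matrix.mulVec, dotProduct]
    apply Finset.dvd_sum
    intro j _
    exact Dvd.dvd.mul_left (by simp) _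
  have h5 : (g : ℤ) ∣ univ.gcd (fun k => U.det * v e k) := Finset.dvd_gcd (fun k _ => h3 k)
  rw [Finset.gcd_mul_left] at h5
  have h6 : univ.gcd (v e) = 1 := h.prim e
  rw [h6, mul_one] at h5
  exact dvd_normalize_iff.1 h5

/-- Volume formula. -/
lemma vol_formula {d g : ℕ} (hg : 1 ≤ g) {v u : Fin (d + 1) → Fin d → ℤ} {A : Fin (d + 1) → ℕ}
    (h : DualData g v u A) (e : Fin (d + 1)) (V : ℚ)
    (hV : |(Matrix.of fun j : Fin d => toQ (v (e.succAbove j))).det| = (g : ℚ) / A e * V) :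
    |((Matrix.of fun k : Fin d => u (e.succAbove k)).det : ℚ)| * V =
      ∏ k, (A (e.succAbove k) : ℚ) := by
  have h1 := congrArg abs (det_pair hg h e)
  have hg' : (0 : ℚ) < g := by exact_mod_cast hg
  have hA : (0 : ℚ) < A e := by exact_mod_cast h.pos e
  have h2 : |((Matrix.of fun k : Fin d => v (e.succAbove k)).det : ℚ)| = (g : ℚ) / A e * V := by
    rw [← hV, Int.cast_det]; rfl
  have h3 : 0 ≤ ∏ k, (A (e.succAbove k) : ℚ) := by positivity
  have h4 : 0 ≤ (∏ k, (A (e.succAbove k) : ℚ)) * (g / A e) := by positivity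
  rw [abs_mul, h2, abs_of_nonneg h4] at h1
  have h5 : (0 : ℚ) < g / A e := by positivity
  apply mul_right_cancel₀ h5.ne'
  linarith

/-! ### Part 7: the bound and reindexing -/

lemma iso_of_matrices {d : ℕ} (v : Fin (d + 1) → Fin d → ℤ) (P : Fin (d + 1) → Fin d → ℚ)
    (W WP : Matrix (Fin d) (Fin d) ℤ) (hW : IsUnit W.det) (hWP : IsUnit WP.det)
    (ρ : Equiv.Perm (Fin (d + 1)))
    (h : ∀ i, (W.map (Int.cast : ℤ → ℚ)).mulVec (toQ (v (ρ i))) =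
      (WP.map (Int.cast : ℤ → ℚ)).mulVec (P i)) : IsIsomorphicToQ v P := by
  refine ⟨WP⁻¹ * W, ρ.symm, ?_, ?_⟩
  · rw [Matrix.det_mul]
    exact (Matrix.isUnit_nonsing_inv_det WP hWP).mul hW
  · intro i
    have h1 := h (ρ.symm i)
    simp only [Equiv.apply_symm_apply] at h1
    have h2 : (WP⁻¹ * W).map (Int.cast : ℤ → ℚ) =
        (WP⁻¹).map (Int.cast : ℤ → ℚ) * W.map (Int.cast : ℤ → ℚ) :=
      Matrix.map_mul (f := Int.castRingHom ℚ)
    have h3 : (WP⁻¹).map (Int.cast : ℤ → ℚ) * WP.map (Int.cast : ℤ → ℚ) = 1 := by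
      have h4 : (WP⁻¹ * WP).map (Int.cast : ℤ → ℚ) =
          (WP⁻¹).map (Int.cast : ℤ → ℚ) * WP.map (Int.cast : ℤ → ℚ) :=
        Matrix.map_mul (f := Int.castRingHom ℚ)
      rw [← h4, Matrix.nonsing_inv_mul _ hWP]
      exact Matrix.map_one _ Int.cast_zero Int.cast_one
    rw [h2, ← Matrix.mulVec_mulVec, h1, Matrix.mulVec_mulVec, h3, Matrix.one_mulVec]

lemma DualData.reindex {d g : ℕ} {v u : Fin (d + 1) → Fin d → ℤ} {A : Fin (d + 1) → ℕ}
    (h : DualData g v u A) (ρ : Equiv.Perm (Fin (d + 1))) :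
    DualData g (fun i => v (ρ i)) (fun i => u (ρ i)) (fun i => A (ρ i)) where
  pair i j := by
    rw [h.pair]; simp only [ρ.injective.eq_iff]
  pos i := h.pos _
  sum := by rw [← h.sum]; exact Equiv.sum_comp ρ (fun i => (1 : ℚ) / A i)
  prim i := h.prim _

lemma iso_reindex {d : ℕ} {v : Fin (d + 1) → Fin d → ℤ} {P : Fin (d + 1) → Fin d → ℚ}
    (ρ : Equiv.Perm (Fin (d + 1))) (h : IsIsomorphicToQ (fun i => v (ρ i)) P) :
    IsIsomorphicToQ v P := by
  obtain ⟨U, σ, hU, hσ⟩ := h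
  refine ⟨U, ρ.symm.trans σ, hU, fun i => ?_⟩
  have := hσ (ρ.symm i)
  simp only [Equiv.apply_symm_apply] at this
  exact this

/-- Put the index `e` last, and the others in the order given by `σ`. -/
lemma exists_reorder {d : ℕ} (e : Fin (d + 1)) (σ : Equiv.Perm (Fin d)) :
    ∃ ρ : Equiv.Perm (Fin (d + 1)), ρ (Fin.last d) = e ∧
      ∀ k, ρ (Fin.castSucc k) = e.succAbove (σ k) := by
  let r : Fin (d + 1) → Fin (d + 1) := Fin.lastCases e (fun k => e.succAbove (σ k))
  have hr1 : r (Fin.last d) = e := by simp [r]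
  have hr2 : ∀ k, r (Fin.castSucc k) = e.succAbove (σ k) := by intro k; simp [r]
  have hinj : Function.Injective r := by
    intro x y
    induction x using Fin.lastCases with
    | last =>
      induction y using Fin.lastCases with
      | last => simp
      | cast y => rw [hr1, hr2]; intro h; exact absurd h.symm (Fin.succAbove_ne _ _)
    | cast x =>
      induction y using Fin.lastCases with
      | last => rw [hr1, hr2]; intro h; exact absurd h (Fin.succAbove_ne _ _)
      | cast y =>
        rw [hr2, hr2]; intro h
        rw [σ.injective (Fin.succAbove_right_injective h)]
  exact ⟨Equiv.ofBijective r (Finite.injective_iff_bijective.1 hinj), hr1, hr2⟩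

/-- The volume bound, and the structure in case of equality. -/
lemma bound_core (N g : ℕ) (hN : 1 ≤ N) (hg : 1 ≤ g) (hNg : ¬(N = 1 ∧ g = 1))
    {v u : Fin (N + 2) → Fin (N + 1) → ℤ} {A : Fin (N + 2) → ℕ} (h : DualData g v u A) (V : ℚ)
    (hVpos : 0 < V)
    (hV : ∀ e, |(Matrix.of fun j : Fin (N + 1) => toQ (v (e.succAbove j))).det| =
      (g : ℚ) / A e * V) :
    V ≤ 2 * (tsylv g (N + 1) : ℚ) ^ 2 / (g : ℚ) ^ 2 ∧
    (V = 2 * (tsylv g (N + 1) : ℚ) ^ 2 / (g : ℚ) ^ 2 →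
      ∃ ρ : Equiv.Perm (Fin (N + 2)),
        |(Matrix.of fun k : Fin (N + 1) => u (ρ (Fin.castSucc k))).det| = g ∧
        ((A (ρ (Fin.last (N + 1))) = 2 * tsylv g (N + 1) ∧
          A (ρ (Fin.castSucc (Fin.last N))) = 2 * tsylv g (N + 1) ∧
          ∀ k : Fin N, A (ρ (Fin.castSucc (Fin.castSucc k))) = sylv g (k.val + 1)) ∨
        (N = 1 ∧ g = 2 ∧ ∀ k, A (ρ k) = 6) ∨
        (N = 2 ∧ g = 1 ∧ ∀ k, A (ρ k) = if k.val = 0 then 2 else 6))) := by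
  have hg' : (0 : ℚ) < g := by exact_mod_cast hg
  obtain ⟨e, he⟩ := Finite.exists_max A
  obtain ⟨m, hm⟩ := g_dvd_det h e
  have hvf := vol_formula hg h e V (hV e)
  have hprodpos : 0 < ∏ k, (A (e.succAbove k) : ℚ) :=
    Finset.prod_pos (fun k _ => by exact_mod_cast h.pos _)
  have hm0 : m ≠ 0 := by
    rintro rfl
    rw [hm] at hvf
    simp at hvf
    linarith
  have hm1 : (1 : ℚ) ≤ |(m : ℚ)| := by
    have : 1 ≤ |m| := Int.one_le_abs hm0
    exact_mod_cast this
  have hvf2 : |(m : ℚ)| * (g * V) = ∏ k, (A (e.succAbove k) : ℚ) := by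
    rw [← hvf, hm]
    push_cast
    rw [abs_mul, abs_of_pos hg']; ring
  have hgV : g * V ≤ ∏ k, (A (e.succAbove k) : ℚ) := by
    rw [← hvf2]
    nlinarith [mul_pos hg' hVpos]
  have hsum : ∑ i, (1 : ℝ) / ((A (e.succAbove i) : ℕ) : ℝ) + 1 / ((A e : ℕ) : ℝ) = 1 / (g : ℝ) := by
    have h1 := h.sum
    rw [Fin.sum_univ_succAbove _ e] at h1
    have h2 := congrArg (Rat.cast : ℚ → ℝ) h1
    push_cast at h2
    linarith
  have hext := unit_fraction_extremal N g hN hg hNg (fun k => A (e.succAbove k)) (A e)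
    (fun k => h.pos _) (h.pos e) hsum (fun k => he _)
  have key : 2 * (tsylv g (N + 1) : ℚ) ^ 2 / (g : ℚ) ^ 2 ≤ V →
      2 * tsylv g (N + 1) ^ 2 ≤ g * ∏ k, A (e.succAbove k) := by
    intro hle
    rw [div_le_iff₀ (by positivity)] at hle
    have : (2 * tsylv g (N + 1) ^ 2 : ℚ) ≤ g * ∏ k, (A (e.succAbove k) : ℚ) := by
      nlinarith
    exact_mod_cast this
  constructor
  · rcases le_total V (2 * (tsylv g (N + 1) : ℚ) ^ 2 / (g : ℚ) ^ 2) with hle | hle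
    · exact hle
    · obtain ⟨h1, -⟩ := hext (key hle)
      have h1' : (g : ℚ) * ∏ k, (A (e.succAbove k) : ℚ) = 2 * (tsylv g (N + 1) : ℚ) ^ 2 := by
        exact_mod_cast h1
      rw [le_div_iff₀ (by positivity), ← h1']
      nlinarith
  · intro hVeq
    obtain ⟨h1, σ, hσ⟩ := hext (key hVeq.ge)
    have h1' : (g : ℚ) * ∏ k, (A (e.succAbove k) : ℚ) = 2 * (tsylv g (N + 1) : ℚ) ^ 2 := by
      exact_mod_cast h1
    have h2 : |(m : ℚ)| = 1 := by
      rw [eq_div_iff (by positivity)] at hVeq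
      rw [← hvf2] at h1'
      have h3 : (|(m : ℚ)| - 1) * (V * g ^ 2) = 0 := by linear_combination h1' - hVeq
      rcases mul_eq_zero.1 h3 with h4 | h4
      · linarith
      · have : 0 < V * (g : ℚ) ^ 2 := by positivity
        linarith
    have h2' : |m| = 1 := by exact_mod_cast h2
    obtain ⟨ρ, hρl, hρc⟩ := exists_reorder e σ
    refine ⟨ρ, ?_, ?_⟩
    · have h3 : (Matrix.of fun k : Fin (N + 1) => u (ρ (Fin.castSucc k))) =
          (Matrix.of fun k : Fin (N + 1) => u (e.succAbove k)).submatrix σ id := by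
        ext i j
        simp [hρc]
      rw [h3, Matrix.det_permute, hm, abs_mul, abs_mul, h2', mul_one]
      rcases Int.units_eq_one_or (Equiv.Perm.sign σ) with h4 | h4 <;> simp [h4]
    · rcases hσ with ⟨a, b, c⟩ | ⟨a, b, c, d⟩ | ⟨a, b, c, d⟩
      · left
        refine ⟨by rw [hρl, a], by rw [hρc]; exact b, fun k => by rw [hρc]; exact c k⟩
      · right; left
        refine ⟨a, b, fun k => ?_⟩
        induction k using Fin.lastCases with
        | last => rw [hρl, c]
        | cast k => rw [hρc]; exact d _
      · right; right
        refine ⟨a, b, fun k => ?_⟩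
        induction k using Fin.lastCases with
        | last => rw [hρl, c]; simp
        | cast k => rw [hρc]; exact d k

/-! ### Part 8: the general extremal simplex -/

lemma Pgen_cast (g N : ℕ) (k : Fin N) :
    Pgen g (N + 1) k.castSucc.castSucc = Pi.single k.castSucc 1 := by
  funext j
  have := k.isLt
  simp only [Pgen, Fin.val_castSucc, Nat.add_sub_cancel, if_pos this, Pi.single_apply, Fin.ext_iff]

lemma Pgen_f_cast (g N : ℕ) (k : Fin N) :
    Pgen g (N + 1) (Fin.last N).castSucc k.castSucc =
      ((sylv g (k.val + 1) : ℚ) - (g : ℚ)) / (sylv g (k.val + 1) : ℚ) *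
        ((tsylv g (N + 1) : ℚ) / (g : ℚ)) := by
  simp [Pgen]

lemma Pgen_f_last (g N : ℕ) :
    Pgen g (N + 1) (Fin.last N).castSucc (Fin.last N) = (tsylv g (N + 1) : ℚ) / (g : ℚ) := by
  simp [Pgen]

lemma Pgen_l_cast (g N : ℕ) (k : Fin N) :
    Pgen g (N + 1) (Fin.last (N + 1)) k.castSucc =
      -(((sylv g (k.val + 1) : ℚ) + (g : ℚ)) / (sylv g (k.val + 1) : ℚ) *
        ((tsylv g (N + 1) : ℚ) / (g : ℚ))) := by
  simp [Pgen]

lemma Pgen_l_last (g N : ℕ) :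
    Pgen g (N + 1) (Fin.last (N + 1)) (Fin.last N) = -((tsylv g (N + 1) : ℚ) / (g : ℚ)) := by
  simp [Pgen]

lemma sum_gs (g N : ℕ) (hg : 1 ≤ g) :
    ∑ k : Fin N, (g : ℚ) / sylv g (k.val + 1) = 1 - g / tsylv g (N + 1) := by
  have h := sum_sylv (K := ℚ) g N hg
  rw [Finset.sum_range] at h
  have hg' : (g : ℚ) ≠ 0 := by positivity
  calc ∑ k : Fin N, (g : ℚ) / sylv g (k.val + 1)
      = g * ∑ k : Fin N, (1 : ℚ) / sylv g (k.val + 1) := by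
        rw [Finset.mul_sum]; exact Finset.sum_congr rfl fun k _ => by ring
    _ = _ := by rw [h]; field_simp

lemma sum_f (g N : ℕ) (hg : 1 ≤ g) :
    ∑ k : Fin N, Pgen g (N + 1) (Fin.last N).castSucc k.castSucc =
      (N - 1) * ((tsylv g (N + 1) : ℚ) / (g : ℚ)) + 1 := by
  have h1 : ∀ k : Fin N, Pgen g (N + 1) (Fin.last N).castSucc k.castSucc =
      (1 - (g : ℚ) / sylv g (k.val + 1)) * ((tsylv g (N + 1) : ℚ) / (g : ℚ)) := by
    intro k
    rw [Pgen_f_cast]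
    have : (0 : ℚ) < sylv g (k.val + 1) := by exact_mod_cast sylv_pos g k.val
    rw [sub_div, div_self this.ne']
  simp only [h1]
  rw [← Finset.sum_mul, Finset.sum_sub_distrib, sum_gs g N hg]
  have hT : (0 : ℚ) < tsylv g (N + 1) := by exact_mod_cast tsylv_pos g N hg
  have hg' : (g : ℚ) ≠ 0 := by positivity
  simp
  field_simp
  ring

lemma sum_l (g N : ℕ) (hg : 1 ≤ g) :
    ∑ k : Fin N, Pgen g (N + 1) (Fin.last (N + 1)) k.castSucc =
      -((N + 1) * ((tsylv g (N + 1) : ℚ) / (g : ℚ)) - 1) := by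
  have h1 : ∀ k : Fin N, Pgen g (N + 1) (Fin.last (N + 1)) k.castSucc =
      (1 + (g : ℚ) / sylv g (k.val + 1)) * (-((tsylv g (N + 1) : ℚ) / (g : ℚ))) := by
    intro k
    rw [Pgen_l_cast]
    have : (0 : ℚ) < sylv g (k.val + 1) := by exact_mod_cast sylv_pos g k.val
    rw [add_div, div_self this.ne']; ring
  simp only [h1]
  rw [← Finset.sum_mul, Finset.sum_add_distrib, sum_gs g N hg]
  have hT : (0 : ℚ) < tsylv g (N + 1) := by exact_mod_cast tsylv_pos g N hg
  have hg' : (g : ℚ) ≠ 0 := by positivity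
  simp
  field_simp
  ring

/-- Determinant of the first `d` columns. -/
lemma det_Pgen (g N : ℕ) :
    (Matrix.of fun k : Fin (N + 1) => Pgen g (N + 1) k.castSucc).det =
      (tsylv g (N + 1) : ℚ) / (g : ℚ) := by
  rw [Matrix.det_of_isLowerTriangular, Fin.prod_univ_castSucc]
  · simp only [Matrix.of_apply, Pgen_cast, Pgen_f_last]
    simp
  · intro i j hij
    have hij' : i < j := hij
    induction i using Fin.lastCases with
    | last => exact absurd hij' (not_lt.2 (Fin.le_last j))
    | cast i =>
      rw [Matrix.of_apply, Pgen_cast, Pi.single_apply, if_neg hij'.ne']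

/-- The comparison matrix of the general extremal simplex. -/
def WPgen (g N : ℕ) : Matrix (Fin (N + 1)) (Fin (N + 1)) ℤ :=
  Matrix.of fun i j =>
    Fin.lastCases (motive := fun _ => ℤ)
      (Fin.lastCases (motive := fun _ => ℤ) ((N : ℤ) + 1) (fun _ => -1) j)
      (fun i => Fin.lastCases (motive := fun _ => ℤ) ((g : ℤ) * N - sylv g (i.val + 1))
        (fun j => -(g : ℤ) + if i = j then (sylv g (i.val + 1) : ℤ) else 0) j) i

lemma WPgen_cc (g N : ℕ) (i j : Fin N) : WPgen g N i.castSucc j.castSucc =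
    -(g : ℤ) + if i = j then (sylv g (i.val + 1) : ℤ) else 0 := by simp [WPgen]
lemma WPgen_cl (g N : ℕ) (i : Fin N) : WPgen g N i.castSucc (Fin.last N) =
    (g : ℤ) * N - sylv g (i.val + 1) := by simp [WPgen]
lemma WPgen_lc (g N : ℕ) (j : Fin N) : WPgen g N (Fin.last N) j.castSucc = -1 := by simp [WPgen]
lemma WPgen_ll (g N : ℕ) : WPgen g N (Fin.last N) (Fin.last N) = (N : ℤ) + 1 := by simp [WPgen]

lemma WP_row_c (g N : ℕ) (i : Fin N) (x : Fin (N + 1) → ℚ) :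
    ((WPgen g N).map (Int.cast : ℤ → ℚ)).mulVec x i.castSucc =
      -(g : ℚ) * (∑ k : Fin N, x k.castSucc) + sylv g (i.val + 1) * x i.castSucc +
        ((g : ℚ) * N - sylv g (i.val + 1)) * x (Fin.last N) := by
  rw [Matrix.mulVec, dotProduct, Fin.sum_univ_castSucc]
  simp only [Matrix.map_apply, WPgen_cc, WPgen_cl]
  push_cast
  simp only [add_mul, Finset.sum_add_distrib, Finset.mul_sum, ite_mul, zero_mul,
    Finset.sum_ite_eq, mem_univ, if_true]

lemma WP_row_l (g N : ℕ) (x : Fin (N + 1) → ℚ) :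
    ((WPgen g N).map (Int.cast : ℤ → ℚ)).mulVec x (Fin.last N) =
      -(∑ k : Fin N, x k.castSucc) + ((N : ℚ) + 1) * x (Fin.last N) := by
  rw [Matrix.mulVec, dotProduct, Fin.sum_univ_castSucc]
  simp only [Matrix.map_apply, WPgen_lc, WPgen_ll]
  push_cast
  simp

/-- The common value of both comparison matrices. -/
lemma WP_val_c (g N : ℕ) (hg : 1 ≤ g) (i : Fin N) (j : Fin (N + 2)) :
    ((WPgen g N).map (Int.cast : ℤ → ℚ)).mulVec (Pgen g (N + 1) j) i.castSucc =
      -(g : ℚ) + if i.castSucc.castSucc = j then (sylv g (i.val + 1) : ℚ) else 0 := by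
  have hT : (0 : ℚ) < tsylv g (N + 1) := by exact_mod_cast tsylv_pos g N hg
  have hg' : (g : ℚ) ≠ 0 := by positivity
  have hs : (0 : ℚ) < sylv g (i.val + 1) := by exact_mod_cast sylv_pos g i.val
  rw [WP_row_c]
  induction j using Fin.lastCases with
  | last =>
    rw [sum_l g N hg, Pgen_l_cast, Pgen_l_last, if_neg (Fin.castSucc_lt_last _).ne]
    field_simp
    ring
  | cast j =>
    induction j using Fin.lastCases with
    | last =>
      rw [sum_f g N hg, Pgen_f_cast, Pgen_f_last, if_neg
        (fun h => (Fin.castSucc_lt_last i).ne (Fin.castSucc_injective _ h))]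
      field_simp
      ring
    | cast j =>
      simp only [Pgen_cast, Pi.single_apply, Fin.castSucc_inj,
        Finset.sum_ite_eq', mem_univ, if_true, if_neg (Fin.castSucc_lt_last j).ne']
      split_ifs <;> ring

lemma WP_val_l (g N : ℕ) (hg : 1 ≤ g) (j : Fin (N + 2)) :
    ((WPgen g N).map (Int.cast : ℤ → ℚ)).mulVec (Pgen g (N + 1) j) (Fin.last N) =
      -1 + if (Fin.last N).castSucc = j then (2 * tsylv g (N + 1) / g : ℚ) else 0 := by
  have hT : (0 : ℚ) < tsylv g (N + 1) := by exact_mod_cast tsylv_pos g N hg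
  have hg' : (g : ℚ) ≠ 0 := by positivity
  rw [WP_row_l]
  induction j using Fin.lastCases with
  | last =>
    rw [sum_l g N hg, Pgen_l_last, if_neg (Fin.castSucc_lt_last _).ne]
    ring
  | cast j =>
    induction j using Fin.lastCases with
    | last =>
      rw [sum_f g N hg, Pgen_f_last, if_pos rfl]
      ring
    | cast j =>
      simp only [Pgen_cast, Pi.single_apply, Fin.castSucc_inj,
        Finset.sum_ite_eq', mem_univ, if_true, if_neg (Fin.castSucc_lt_last j).ne']
      ring

lemma f_dvd (N g : ℕ) {v u : Fin (N + 2) → Fin (N + 1) → ℤ} {A : Fin (N + 2) → ℕ}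
    (h : DualData g v u A)
    (hdet : |(Matrix.of fun k : Fin (N + 1) => u (Fin.castSucc k)).det| = g)
    (hAk : ∀ k : Fin N, A (Fin.castSucc (Fin.castSucc k)) = sylv g (k.val + 1))
    (z : Fin (N + 1) → ℤ) : (g : ℤ) ∣ u (Fin.castSucc (Fin.last N)) ⬝ᵥ z := by
  set U : Matrix (Fin (N + 1)) (Fin (N + 1)) ℤ :=
    Matrix.of fun k : Fin (N + 1) => u (Fin.castSucc k) with hU
  let Z : Matrix (Fin (N + 1)) (Fin (N + 1)) ℤ :=
    Matrix.of fun k => Fin.lastCases (motive := fun _ => Fin (N + 1) → ℤ) z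
      (fun k => v k.castSucc.castSucc) k
  have h1 : (g : ℤ) ∣ (U * Z.transpose).det := by
    rw [Matrix.det_mul]
    apply Dvd.dvd.mul_right
    rw [← hdet]
    exact (abs_dvd _ _).2 dvd_rfl
  have hentry : ∀ i (j : Fin N), (U * Z.transpose) i j.castSucc =
      -(g : ℤ) + if i.castSucc = j.castSucc.castSucc then (A i.castSucc : ℤ) else 0 := by
    intro i j
    rw [← h.pair]
    simp [Matrix.mul_apply, U, Z, dotProduct]
  have hlast : (U * Z.transpose) (Fin.last N) (Fin.last N) =
      u (Fin.castSucc (Fin.last N)) ⬝ᵥ z := by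
    simp [Matrix.mul_apply, U, Z, dotProduct]
  have hs : ∀ k : ℕ, ((sylv g (k + 1) : ℕ) : ZMod g) = 1 := by
    intro k
    rw [sylv_eq, ← prod_sylv]
    simp
  have h2 : (((U * Z.transpose).det : ℤ) : ZMod g) = 0 :=
    (ZMod.intCast_zmod_eq_zero_iff_dvd _ _).2 h1
  rw [Int.cast_det, Matrix.det_of_isUpperTriangular, Fin.prod_univ_castSucc] at h2
  · have h3 : ∏ i : Fin N, ((U * Z.transpose).map (fun x => (x : ZMod g))) i.castSucc i.castSucc
        = 1 := by
      apply Finset.prod_eq_one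
      intro i _
      rw [Matrix.map_apply, hentry, if_pos rfl, hAk]
      push_cast
      rw [hs]
      simp
    rw [h3, one_mul, Matrix.map_apply, hlast] at h2
    exact (ZMod.intCast_zmod_eq_zero_iff_dvd _ _).1 h2
  · intro i j hij
    have hij' : j < i := hij
    induction j using Fin.lastCases with
    | last => exact absurd hij' (not_lt.2 (Fin.le_last i))
    | cast j =>
      rw [Matrix.map_apply, hentry, if_neg]
      · simp
      · intro hc
        exact hij'.ne' (Fin.castSucc_injective _ hc)

/-- Equality case with Sylvester denominators. -/
lemma case_gen (N g : ℕ) (hg : 1 ≤ g) {v u : Fin (N + 2) → Fin (N + 1) → ℤ} {A : Fin (N + 2) → ℕ}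
    (h : DualData g v u A)
    (hdet : |(Matrix.of fun k : Fin (N + 1) => u (Fin.castSucc k)).det| = g)
    (hAl : A (Fin.last (N + 1)) = 2 * tsylv g (N + 1))
    (hAf : A (Fin.castSucc (Fin.last N)) = 2 * tsylv g (N + 1))
    (hAk : ∀ k : Fin N, A (Fin.castSucc (Fin.castSucc k)) = sylv g (k.val + 1)) :
    IsIsomorphicToQ v (Pgen g (N + 1)) := by
  have hT : (0 : ℚ) < tsylv g (N + 1) := by exact_mod_cast tsylv_pos g N hg
  have hgp : (0 : ℚ) < g := by exact_mod_cast hg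
  have hgz : (0 : ℤ) < g := by exact_mod_cast hg
  have hdv : ∀ j, (g : ℤ) ∣ u (Fin.castSucc (Fin.last N)) j := by
    intro j
    have := f_dvd N g h hdet hAk (Pi.single j 1)
    simpa using this
  choose y hy using hdv
  let U : Matrix (Fin (N + 1)) (Fin (N + 1)) ℤ :=
    Matrix.of fun k : Fin (N + 1) => u (Fin.castSucc k)
  let W : Matrix (Fin (N + 1)) (Fin (N + 1)) ℤ := U.updateRow (Fin.last N) y
  have hUW : U = W.updateRow (Fin.last N) ((g : ℤ) • y) := by
    ext i j
    by_cases hi : i = Fin.last N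
    · subst hi
      simp [U, hy]
    · simp [W, Matrix.updateRow_ne hi]
  have hWd : |W.det| = 1 := by
    have h1 : |U.det| = g := hdet
    rw [hUW, Matrix.det_updateRow_smul] at h1
    have h2 : W.updateRow (Fin.last N) y = W := by
      simp [W]
    rw [h2, abs_mul, abs_of_pos hgz] at h1
    exact mul_left_cancel₀ hgz.ne' (by linarith)
  -- values of `W`
  have hWc : ∀ (i : Fin N) (j : Fin (N + 2)),
      (W.map (Int.cast : ℤ → ℚ)).mulVec (toQ (v j)) i.castSucc =
      -(g : ℚ) + if i.castSucc.castSucc = j then (sylv g (i.val + 1) : ℚ) else 0 := by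
    intro i j
    have h1 := h.pair i.castSucc.castSucc j
    rw [hAk] at h1
    have h2 : (W.map (Int.cast : ℤ → ℚ)).mulVec (toQ (v j)) i.castSucc =
        toQ (u i.castSucc.castSucc) ⬝ᵥ toQ (v j) := by
      simp only [Matrix.mulVec, dotProduct, Matrix.map_apply, W,
        Matrix.updateRow_ne (Fin.castSucc_lt_last i).ne]
      rfl
    rw [h2, toQ_dot, h1]
    push_cast
    rfl
  have hWl : ∀ (j : Fin (N + 2)),
      (W.map (Int.cast : ℤ → ℚ)).mulVec (toQ (v j)) (Fin.last N) =
      -1 + if (Fin.last N).castSucc = j then (2 * tsylv g (N + 1) / g : ℚ) else 0 := by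
    intro j
    have h1 := h.pair (Fin.last N).castSucc j
    rw [hAf] at h1
    have h2 : (g : ℚ) * (W.map (Int.cast : ℤ → ℚ)).mulVec (toQ (v j)) (Fin.last N) =
        toQ (u (Fin.last N).castSucc) ⬝ᵥ toQ (v j) := by
      simp only [Matrix.mulVec, dotProduct, Matrix.map_apply, W,
        Matrix.updateRow_self, Finset.mul_sum]
      apply Finset.sum_congr rfl
      intro k _
      simp only [toQ, hy]
      push_cast
      ring
    rw [toQ_dot, h1] at h2
    apply mul_left_cancel₀ hgp.ne'
    rw [h2]
    push_cast
    split_ifs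
    · field_simp
    · ring
  have hall : ∀ j, (W.map (Int.cast : ℤ → ℚ)).mulVec (toQ (v j)) =
      ((WPgen g N).map (Int.cast : ℤ → ℚ)).mulVec (Pgen g (N + 1) j) := by
    intro j
    funext i
    induction i using Fin.lastCases with
    | last => rw [hWl, WP_val_l g N hg]
    | cast i => rw [hWc, WP_val_c g N hg]
  -- determinant of the comparison matrix
  let VV : Matrix (Fin (N + 1)) (Fin (N + 1)) ℤ := Matrix.of fun k => v (Fin.castSucc k)
  have hVd : |(VV.det : ℚ)| = tsylv g (N + 1) / g := by
    have h1 := det_pair hg h (Fin.last (N + 1))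
    simp only [Fin.succAbove_last] at h1
    rw [Fin.prod_univ_castSucc, hAf, hAl] at h1
    simp only [hAk] at h1
    have h2 := prod_sylv g N
    rw [Finset.prod_range] at h2
    have h2' : (∏ i : Fin N, (sylv g (i.val + 1) : ℚ)) * g = tsylv g (N + 1) := by
      exact_mod_cast h2
    have h3 := congrArg abs h1
    have h5 : |((Matrix.of fun k : Fin (N + 1) => u (Fin.castSucc k)).det : ℚ)| = g := by
      exact_mod_cast hdet
    rw [abs_mul, h5] at h3
    have h4 : (∏ i : Fin N, (sylv g (i.val + 1) : ℚ)) * ((2 * tsylv g (N + 1) : ℕ) : ℚ) *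
        (g / ((2 * tsylv g (N + 1) : ℕ) : ℚ)) = tsylv g (N + 1) := by
      rw [← h2']
      have : ((2 * tsylv g (N + 1) : ℕ) : ℚ) ≠ 0 := by push_cast; positivity
      field_simp
    rw [h4, abs_of_pos hT] at h3
    rw [eq_div_iff hgp.ne', ← h3]
    ring
  have hWPd : |(WPgen g N).det| = 1 := by
    have h1 : W.map (Int.cast : ℤ → ℚ) * (VV.map (Int.cast : ℤ → ℚ)).transpose =
        (WPgen g N).map (Int.cast : ℤ → ℚ) *
          (Matrix.of fun k : Fin (N + 1) => Pgen g (N + 1) k.castSucc).transpose := by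
      ext i j
      exact congrFun (hall j.castSucc) i
    have h2 := congrArg (fun M => |Matrix.det M|) h1
    simp only [Matrix.det_mul, Matrix.det_transpose, det_Pgen, abs_mul] at h2
    have h3 : ∀ M : Matrix (Fin (N + 1)) (Fin (N + 1)) ℤ,
        (M.map (Int.cast : ℤ → ℚ)).det = (M.det : ℚ) := fun M => (Int.cast_det M).symm
    rw [h3, h3, h3, hVd, abs_of_pos (by positivity : (0 : ℚ) < tsylv g (N + 1) / g)] at h2
    have h4 := mul_right_cancel₀ (by positivity : (tsylv g (N + 1) / g : ℚ) ≠ 0) h2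
    have h5 : |W.det| = |(WPgen g N).det| := by exact_mod_cast h4
    rw [← h5, hWd]
  exact iso_of_matrices v _ W (WPgen g N) (Int.isUnit_iff_abs_eq.2 hWd)
    (Int.isUnit_iff_abs_eq.2 hWPd) (Equiv.refl _) hall

/-! ### Part 9: the remaining equality cases and the converse -/

lemma case_six {v u : Fin 3 → Fin 2 → ℤ} {A : Fin 3 → ℕ} (h : DualData 2 v u A)
    (hdet : |(Matrix.of fun k : Fin 2 => u (Fin.castSucc k)).det| = 2)
    (hA : ∀ k, A k = 6) : False := by
  have hp : ∀ i j, u i ⬝ᵥ v j = -2 + if i = j then 6 else 0 := by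
    intro i j
    rw [h.pair, hA]; rfl
  have hd := det_pair (by norm_num) h (Fin.last 2)
  simp only [Fin.succAbove_last, hA, Matrix.det_fin_two, Matrix.of_apply] at hd
  rw [Matrix.det_fin_two] at hdet
  simp only [Matrix.of_apply] at hdet
  have hc0 : Fin.castSucc (0 : Fin 2) = (0 : Fin 3) := rfl
  have hc1 : Fin.castSucc (1 : Fin 2) = (1 : Fin 3) := rfl
  rw [hc0, hc1] at hdet hd
  norm_num at hd
  have hd' : (u 0 0 * u 1 1 - u 0 1 * u 1 0) * (v 0 0 * v 1 1 - v 0 1 * v 1 0) = 12 := by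
    exact_mod_cast hd
  have p00 := hp 0 0
  have p01 := hp 0 1
  have p02 := hp 0 2
  have p10 := hp 1 0
  have p11 := hp 1 1
  have p12 := hp 1 2
  simp [dotProduct, Fin.sum_univ_two] at p00 p01 p02 p10 p11 p12
  have hne : u 0 0 * u 1 1 - u 0 1 * u 1 0 ≠ 0 := by
    intro h0; rw [h0] at hdet; norm_num at hdet
  have s0 : v 2 0 = -v 0 0 - v 1 0 := by
    have : (u 0 0 * u 1 1 - u 0 1 * u 1 0) * (v 0 0 + v 1 0 + v 2 0) = 0 := by
      linear_combination u 1 1 * (p00 + p01 + p02) - u 0 1 * (p10 + p11 + p12)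
    rcases mul_eq_zero.1 this with h1 | h1
    · exact absurd h1 hne
    · linarith
  have s1 : v 2 1 = -v 0 1 - v 1 1 := by
    have : (u 0 0 * u 1 1 - u 0 1 * u 1 0) * (v 0 1 + v 1 1 + v 2 1) = 0 := by
      linear_combination u 0 0 * (p10 + p11 + p12) - u 1 0 * (p00 + p01 + p02)
    rcases mul_eq_zero.1 this with h1 | h1
    · exact absurd h1 hne
    · linarith
  have hev : Even (v 0 0 * v 1 1 - v 0 1 * v 1 0) := by
    rcases (abs_eq (by norm_num : (0 : ℤ) ≤ 2)).1 hdet with h1 | h1 <;> rw [h1] at hd'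
    · exact ⟨3, by linarith⟩
    · exact ⟨-3, by linarith⟩
  have hprim : ∀ i, ¬(Even (v i 0) ∧ Even (v i 1)) := by
    rintro i ⟨h0, h1⟩
    have h2 : (2 : ℤ) ∣ univ.gcd (v i) := by
      apply Finset.dvd_gcd
      intro k _
      fin_cases k
      · exact h0.two_dvd
      · exact h1.two_dvd
    have h3 : univ.gcd (v i) = 1 := h.prim i
    rw [h3] at h2
    norm_num at h2
  have q0 := hprim 0
  have q1 := hprim 1
  have q2 := hprim 2
  rw [s0, s1] at q2
  simp only [Int.even_sub, Int.even_mul, even_neg] at hev q2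
  tauto

/-- Comparison matrix of the exceptional simplex. -/
def WPexc : Matrix (Fin 3) (Fin 3) ℤ := !![1, -1, 0; -1, 3, -1; -1, 0, 1]

lemma WPexc_val (i : Fin 3) (j : Fin 4) :
    (WPexc.map (Int.cast : ℤ → ℚ)).mulVec (Pexc 3 j) i =
      -1 + if i.castSucc = j then (if i.val = 0 then 2 else 6) else 0 := by
  fin_cases i <;> fin_cases j <;>
    simp [WPexc, Pexc, Matrix.mulVec, dotProduct, Fin.sum_univ_three] <;> norm_num

lemma case_exc {v u : Fin 4 → Fin 3 → ℤ} {A : Fin 4 → ℕ} (h : DualData 1 v u A)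
    (hdet : |(Matrix.of fun k : Fin 3 => u (Fin.castSucc k)).det| = 1)
    (hA : ∀ k, A k = if k.val = 0 then 2 else 6) : IsIsomorphicToQ v (Pexc 3) := by
  refine iso_of_matrices v _ (Matrix.of fun k : Fin 3 => u (Fin.castSucc k)) WPexc
    (Int.isUnit_iff_abs_eq.2 hdet) ?_ (Equiv.refl _) ?_
  · have : WPexc.det = 1 := by
      simp [WPexc, Matrix.det_fin_three]
    rw [this]; exact isUnit_one
  · intro j
    funext i
    rw [WPexc_val]
    have h1 := h.pair i.castSucc j
    rw [hA] at h1
    have h2 : ((Matrix.of fun k : Fin 3 => u (Fin.castSucc k)).map (Int.cast : ℤ → ℚ)).mulVec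
        (toQ (v j)) i = toQ (u i.castSucc) ⬝ᵥ toQ (v j) := rfl
    rw [Equiv.refl_apply, h2, toQ_dot, h1]
    push_cast
    rfl

lemma mulVec_dot {d : ℕ} (M : Matrix (Fin d) (Fin d) ℚ) (x y : Fin d → ℚ) :
    Matrix.vecMul x M ⬝ᵥ y = x ⬝ᵥ M.mulVec y := (Matrix.dotProduct_mulVec x M y).symm

/-- Volume of a simplex isomorphic to a given one. -/
lemma vol_of_iso {d : ℕ} (v : Fin (d + 1) → Fin d → ℤ) (hF : IsFanoSimplex v)
    (P : Fin (d + 1) → Fin d → ℚ) (hiso : IsIsomorphicToQ v P) (φ : Fin d → ℚ) (c D : ℚ)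
    (hc : 0 < c)
    (hφ : ∀ k : Fin d, φ ⬝ᵥ P k.castSucc = -1) (hφl : φ ⬝ᵥ P (Fin.last d) = c - 1)
    (hD : |(Matrix.of fun k : Fin d => P k.castSucc).det| = D) :
    normVol (fun i => toQ (v i)) = c * D := by
  obtain ⟨U, σ, hU, hσ⟩ := hiso
  obtain ⟨haff, hprim, w, hw0, hw, hwv⟩ := hF
  obtain ⟨ρ, hρl, hρc⟩ := exists_reorder (σ.symm (Fin.last d)) (Equiv.refl _)
  have hσe : σ (σ.symm (Fin.last d)) = Fin.last d := Equiv.apply_symm_apply _ _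
  set e := σ.symm (Fin.last d) with he
  have hwe : w e * c = 1 := by
    have h1 := dot_weight (fun i => toQ (v i)) w hwv
      (Matrix.vecMul φ (U.map (Int.cast : ℤ → ℚ)))
    simp only [mulVec_dot, hσ] at h1
    have h2 : ∀ i, i ≠ e → φ ⬝ᵥ P (σ i) = -1 := by
      intro i hi
      have : σ i ≠ Fin.last d := fun hc => hi (by rw [he, ← hc, Equiv.symm_apply_apply])
      obtain ⟨k, hk⟩ := Fin.exists_castSucc_eq.2 this
      rw [← hk, hφ]
    have h3 : ∑ i, w i * (φ ⬝ᵥ P (σ i) + 1) = 1 := by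
      simp only [mul_add, mul_one, Finset.sum_add_distrib, h1, hw, zero_add]
    rw [← Finset.add_sum_erase _ _ (mem_univ e), Finset.sum_eq_zero (fun k hk => by
      rw [h2 k (Finset.ne_of_mem_erase hk)]; ring), hσe, hφl] at h3
    linarith
  have hfac := facet_det (fun i => toQ (v i)) w hw hwv e (hw0 e)
  have hπ : ∀ j : Fin d, ∃ k : Fin d, k.castSucc = σ (e.succAbove j) := by
    intro j
    apply Fin.exists_castSucc_eq.2
    intro hc
    exact Fin.succAbove_ne e j (σ.injective (hc.trans hσe.symm))
  choose π hπ using hπ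
  have hinj : Function.Injective π := by
    intro x y hxy
    have h1 := hπ x
    rw [hxy, hπ y] at h1
    exact (Fin.succAbove_right_injective (σ.injective h1)).symm
  let π' : Equiv.Perm (Fin d) := Equiv.ofBijective π (Finite.injective_iff_bijective.1 hinj)
  have hmat : (Matrix.of fun j : Fin d => toQ (v (e.succAbove j))) *
      (U.map (Int.cast : ℤ → ℚ)).transpose =
      (Matrix.of fun k : Fin d => P k.castSucc).submatrix π' id := by
    ext j i
    have h1 := congrFun (hσ (e.succAbove j)) i
    rw [← hπ] at h1
    have h2 : ((Matrix.of fun k : Fin d => P k.castSucc).submatrix π' id) j i =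
        P (π j).castSucc i := rfl
    rw [h2, ← h1, Matrix.mul_apply, Matrix.mulVec, dotProduct]
    exact Finset.sum_congr rfl fun k _ => mul_comm _ _
  have hdet := congrArg (fun M => |Matrix.det M|) hmat
  have hUd : |((U.map (Int.cast : ℤ → ℚ))).det| = 1 := by
    have h1 : (U.map (Int.cast : ℤ → ℚ)).det = (U.det : ℚ) := (Int.cast_det U).symm
    rw [h1]
    exact_mod_cast Int.isUnit_iff_abs_eq.1 hU
  simp only [Matrix.det_mul, Matrix.det_transpose, abs_mul, hUd, mul_one,
    Matrix.det_permute, hD] at hdet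
  have hsg : |((Equiv.Perm.sign π' : ℤ) : ℚ)| = 1 := by
    rcases Int.units_eq_one_or (Equiv.Perm.sign π') with h4 | h4 <;> simp [h4]
  rw [hsg, one_mul, hfac] at hdet
  calc normVol (fun i => toQ (v i)) = (w e * c) * normVol (fun i => toQ (v i)) := by
        rw [hwe, one_mul]
    _ = c * (w e * normVol (fun i => toQ (v i))) := by ring
    _ = c * D := by rw [hdet]

lemma vol_gen (N g : ℕ) (hg : 1 ≤ g) (v : Fin (N + 2) → Fin (N + 1) → ℤ) (hF : IsFanoSimplex v)
    (hiso : IsIsomorphicToQ v (Pgen g (N + 1))) :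
    normVol (fun i => toQ (v i)) = 2 * (tsylv g (N + 1) : ℚ) ^ 2 / (g : ℚ) ^ 2 := by
  have hT : (0 : ℚ) < tsylv g (N + 1) := by exact_mod_cast tsylv_pos g N hg
  have hgp : (0 : ℚ) < g := by exact_mod_cast hg
  let φ : Fin (N + 1) → ℚ := Fin.lastCases (motive := fun _ => ℚ) ((N : ℚ) - 1) (fun _ => -1)
  have hφ : ∀ x : Fin (N + 1) → ℚ, φ ⬝ᵥ x =
      -(∑ k : Fin N, x k.castSucc) + ((N : ℚ) - 1) * x (Fin.last N) := by
    intro x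
    rw [dotProduct, Fin.sum_univ_castSucc]
    simp [φ]
  rw [vol_of_iso v hF _ hiso φ (2 * (tsylv g (N + 1) / g)) (tsylv g (N + 1) / g)
    (by positivity) ?_ ?_ ?_]
  · field_simp
  · intro k
    rw [hφ]
    induction k using Fin.lastCases with
    | last => rw [sum_f g N hg, Pgen_f_last]; ring
    | cast k =>
      simp only [Pgen_cast, Pi.single_apply, Fin.castSucc_inj,
        Finset.sum_ite_eq', mem_univ, if_true, if_neg (Fin.castSucc_lt_last k).ne']
      ring
  · rw [hφ, sum_l g N hg, Pgen_l_last]; ring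
  · rw [det_Pgen, abs_of_pos (by positivity)]

/-- Dual vertices of the exceptional simplex. -/
def dualExc : Fin 4 → Fin 3 → ℤ := ![![1, -1, 0], ![-1, 3, -1], ![-1, 0, 1], ![-1, 0, 0]]

lemma dualExc_val (i j : Fin 4) (h : j ≠ i) : toQ (dualExc i) ⬝ᵥ Pexc 3 j = -1 := by
  fin_cases i <;> fin_cases j <;>
    first
    | exact absurd rfl h
    | (simp [dualExc, toQ, Pexc, dotProduct, Fin.sum_univ_three] <;> norm_num)

lemma gor_exc (v : Fin 4 → Fin 3 → ℤ) (hF : IsFanoSimplex v)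
    (hiso : IsIsomorphicToQ v (Pexc 3)) : gorensteinIndex (fun i => toQ (v i)) ≤ 1 := by
  obtain ⟨U, σ, hU, hσ⟩ := hiso
  obtain ⟨haff, hprim, w, hw0, hw, hwv⟩ := hF
  apply Nat.sInf_le
  refine ⟨Nat.one_pos, ?_⟩
  apply lattice_of_dual (fun i => toQ (v i)) w hw0 hw hwv haff 1 Nat.one_pos
    (fun i => Matrix.vecMul (dualExc (σ i)) U)
  intro i j hij
  have h1 : toQ (Matrix.vecMul (dualExc (σ i)) U) =
      Matrix.vecMul (toQ (dualExc (σ i))) (U.map (Int.cast : ℤ → ℚ)) := by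
    funext k
    simp [toQ, Matrix.vecMul, dotProduct]
  rw [h1, mulVec_dot, hσ, dualExc_val _ _ (fun hc => hij (σ.injective hc))]
  simp

lemma vol_exc (v : Fin 4 → Fin 3 → ℤ) (hF : IsFanoSimplex v)
    (hiso : IsIsomorphicToQ v (Pexc 3)) : normVol (fun i => toQ (v i)) = 72 := by
  rw [vol_of_iso v hF _ hiso ![-1, 0, 0] 6 12 (by norm_num) ?_ ?_ ?_]
  · norm_num
  · intro k
    fin_cases k <;> simp [Pexc, dotProduct, Fin.sum_univ_three]
  · simp [Pexc, dotProduct, Fin.sum_univ_three]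
    norm_num
  · simp [Pexc, Matrix.det_fin_three]
    norm_num

lemma tsylv_one_three : tsylv 1 3 = 6 := by decide

/-- For a Fano simplex of dimension `d ≥ 2` and Gorenstein index
`g ≥ 1` with `(d,g) ≠ (2,1)` one has `Vol(Δ) ≤ 2 t_{g,d}² / g²`, with equality iff
`Δ` is isomorphic to `Δ(P)` for one of the two listed extremal matrices. -/
theorem volume_bound_general
    (d g : ℕ) (hd : 2 ≤ d) (hg : 1 ≤ g) (hdg : ¬(d = 2 ∧ g = 1))
    (v : Fin (d + 1) → Fin d → ℤ)
    (hFano : IsFanoSimplex v)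
    (hGor : gorensteinIndex (fun i => toQ (v i)) = g) :
    normVol (fun i => toQ (v i)) ≤ 2 * (tsylv g d : ℚ) ^ 2 / (g : ℚ) ^ 2 ∧
      (normVol (fun i => toQ (v i)) = 2 * (tsylv g d : ℚ) ^ 2 / (g : ℚ) ^ 2 ↔
        (d = 3 ∧ IsIsomorphicToQ v (Pexc d)) ∨ IsIsomorphicToQ v (Pgen g d)) := by
  obtain ⟨N, rfl⟩ : ∃ N, d = N + 1 := ⟨d - 1, by omega⟩
  obtain ⟨u, A, hD, hV⟩ := exists_dualData hg v hFano hGor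
  have hpos := normVol_pos (fun i => toQ (v i)) hFano.1
  obtain ⟨hb, heq⟩ := bound_core N g (by omega) hg (by omega) hD _ hpos hV
  refine ⟨hb, fun h => ?_, ?_⟩
  · obtain ⟨ρ, hdet, hcase⟩ := heq h
    rcases hcase with ⟨h1, h2, h3⟩ | ⟨h1, h2, h3⟩ | ⟨h1, h2, h3⟩
    · right
      exact iso_reindex ρ (case_gen N g hg (hD.reindex ρ) hdet h1 h2 h3)
    · subst h1 h2
      exact (case_six (hD.reindex ρ) hdet h3).elim
    · subst h1 h2
      left
      exact ⟨rfl, iso_reindex ρ (case_exc (hD.reindex ρ) hdet h3)⟩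
  · rintro (⟨h1, h2⟩ | h2)
    · obtain rfl : N = 2 := by omega
      have h3 : g ≤ 1 := hGor.symm.le.trans (gor_exc v hFano h2)
      obtain rfl : g = 1 := by omega
      rw [vol_exc v hFano h2, tsylv_one_three]
      norm_num
    · exact vol_gen N g hg v hFano h2
end

section
/- Let Δ be a Fano simplex of dimension d = 3 and Gorenstein index g ∈ {1,2}. Then mult(Δ) ≤ 16g², and equality holds if and only if Δ ≅ Δ(P) where P is the 3×4 integer matrix with columns (1,0,0), (4g−3, 4g, 0), (4g−3, 0, 4g), (5−8g, −4g, −4g). -/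
open Finset Pointwise

/-- The multiplicity of a Fano simplex: the index in `ℤ^d` of the sublattice
generated by the vertices. -/
noncomputable def multOf {d : ℕ} (v : Fin (d + 1) → Fin d → ℤ) : ℕ :=
  (AddSubgroup.closure (Set.range v)).index


/-- explicit 3x3 determinant -/
def d3 (x y z : Fin 3 → ℤ) : ℤ :=
  x 0 * (y 1 * z 2 - y 2 * z 1) - x 1 * (y 0 * z 2 - y 2 * z 0) + x 2 * (y 0 * z 1 - y 1 * z 0)

lemma d3_eq_det (b : Fin 3 → Fin 3 → ℤ) : (Matrix.of b).det = d3 (b 0) (b 1) (b 2) := by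
  rw [Matrix.det_fin_three]; simp [d3]; ring

lemma linInd_of_d3 (b : Fin 3 → Fin 3 → ℤ) (h : d3 (b 0) (b 1) (b 2) ≠ 0) :
    LinearIndependent ℤ b := by
  have := Matrix.linearIndependent_rows_of_det_ne_zero (A := Matrix.of b) (by rwa [d3_eq_det])
  exact this

lemma lat_basis (v : Fin 4 → Fin 3 → ℤ) (h : d3 (v 1) (v 2) (v 3) ≠ 0) :
    ∃ (b : Fin 3 → Fin 3 → ℤ) (c : Fin 4 → Fin 3 → ℤ) (n : Fin 3 → Fin 4 → ℤ),
      multOf v = (d3 (b 0) (b 1) (b 2)).natAbs ∧ (∀ j, v j = ∑ k, c j k • b k) ∧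
      (∀ k l, ∑ j, n k j * c j l = if k = l then 1 else 0) := by
  set N : Submodule ℤ (Fin 3 → ℤ) := Submodule.span ℤ (Set.range v) with hN
  obtain ⟨r, b0⟩ := Submodule.basisOfPid (Pi.basisFun ℤ (Fin 3)) N
  have hvN : ∀ j, v j ∈ N := fun j => Submodule.subset_span ⟨j, rfl⟩
  have hr : r = 3 := by
    have h1 : Module.finrank ℤ N = r := by simpa using Module.finrank_eq_card_basis b0
    have h2 : Module.finrank ℤ N ≤ 3 := by simpa using Submodule.finrank_le N
    have hli : LinearIndependent ℤ (fun i : Fin 3 => (⟨v i.succ, hvN _⟩ : N)) := by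
      apply LinearIndependent.of_comp N.subtype
      exact linInd_of_d3 (fun i => v i.succ) h
    have h3 := hli.fintype_card_le_finrank
    simp at h3
    omega
  subst hr
  have hspan : ∀ k, ∃ n : Fin 4 → ℤ, ∑ j, n j • v j = (b0 k : Fin 3 → ℤ) := fun k =>
    (Submodule.mem_span_range_iff_exists_fun ℤ).1 (b0 k).2
  choose n hn using hspan
  refine ⟨fun k => b0 k, fun j k => b0.repr ⟨v j, hvN j⟩ k, n, ?_, ?_, ?_⟩
  · have := AddSubgroup.index_eq_natAbs_det (Pi.basisFun ℤ (Fin 3)) N.toAddSubgroup b0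
    rw [multOf, ← Submodule.span_int_eq_addSubgroupClosure, this, ← d3_eq_det (fun k => (b0 k : Fin 3 → ℤ)),
      Module.Basis.det_apply, ← Matrix.det_transpose]
    congr 1
  · intro j
    have := b0.sum_repr ⟨v j, hvN j⟩
    have := congrArg (Subtype.val) this
    rw [AddSubmonoidClass.coe_finsetSum] at this
    exact this.symm
  · intro k l
    have : b0 k = ∑ j, n k j • (⟨v j, hvN j⟩ : N) := by
      ext1; simp [← hn k]
    have h2 := congrArg (fun x => b0.repr x l) this
    simp only [map_sum, map_smul, Module.Basis.repr_self] at h2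
    simp [Finsupp.single_apply] at h2
    exact h2.symm

lemma mult_of_basis (v : Fin 4 → Fin 3 → ℤ) (h : d3 (v 0) (v 1) (v 2) ≠ 0)
    (h3 : ∃ a b c : ℤ, v 3 = a • v 0 + b • v 1 + c • v 2) :
    multOf v = (d3 (v 0) (v 1) (v 2)).natAbs := by
  have hli : LinearIndependent ℤ (fun i : Fin 3 => v i.castSucc) := linInd_of_d3 _ h
  have := AddSubgroup.index_eq_natAbs_det (Pi.basisFun ℤ (Fin 3))
    (Submodule.span ℤ (Set.range (fun i : Fin 3 => v i.castSucc))).toAddSubgroup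
    (Module.Basis.span hli)
  have hs : Submodule.span ℤ (Set.range v) =
      Submodule.span ℤ (Set.range (fun i : Fin 3 => v i.castSucc)) := by
    have hm : ∀ i : Fin 3, v i.castSucc ∈
      Submodule.span ℤ (Set.range (fun i : Fin 3 => v i.castSucc)) :=
      fun i => Submodule.subset_span ⟨i, rfl⟩
    apply le_antisymm
    · rw [Submodule.span_le]
      rintro _ ⟨i, rfl⟩
      fin_cases i
      · exact hm 0
      · exact hm 1
      · exact hm 2
      · obtain ⟨a, b, c, e⟩ := h3
        simp only [SetLike.mem_coe]
        show v 3 ∈ _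
        rw [e]
        exact add_mem (add_mem (Submodule.smul_mem _ _ (hm 0)) (Submodule.smul_mem _ _ (hm 1)))
          (Submodule.smul_mem _ _ (hm 2))
    · apply Submodule.span_mono
      rintro _ ⟨i, rfl⟩
      exact ⟨_, rfl⟩
  rw [multOf, ← Submodule.span_int_eq_addSubgroupClosure, hs, this,
      Module.Basis.det_apply, ← Matrix.det_transpose]
  have e := d3_eq_det (fun i : Fin 3 => v i.castSucc)
  have : d3 (v 0) (v 1) (v 2) = (Matrix.of (fun i : Fin 3 => v i.castSucc)).det := e.symm
  rw [this]
  congr 2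
  ext i j
  simp only [Module.Basis.toMatrix_apply, Matrix.transpose_apply, Pi.basisFun_repr, Matrix.of_apply]
  exact congrFun (congrArg Subtype.val (Module.Basis.span_apply hli i)) j

lemma mult_iso (v w : Fin 4 → Fin 3 → ℤ) (h : IsIsomorphicTo v w) : multOf v = multOf w := by
  obtain ⟨U, σ, hU, hv⟩ := h
  have : Invertible U := U.invertibleOfIsUnitDet hU
  let e : (Fin 3 → ℤ) ≃+ (Fin 3 → ℤ) := (Matrix.toLinearEquiv' U this).toAddEquiv
  have he : ∀ i, e (v i) = w (σ i) := fun i => by rw [← hv]; rfl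
  have : AddSubgroup.closure (Set.range w) =
      (AddSubgroup.closure (Set.range v)).map (e : (Fin 3 → ℤ) →+ (Fin 3 → ℤ)) := by
    rw [AddMonoidHom.map_closure, ← Set.range_comp]
    congr 1
    rw [← σ.surjective.range_comp]
    congr 1
    ext1 i
    simp [he]
  rw [multOf, multOf, this]
  exact (AddSubgroup.index_map_equiv _ e).symm

lemma dual_vertices (g : ℕ) (hg : 0 < g) (v : Fin 4 → Fin 3 → ℤ) (hF : IsFanoSimplex v)
    (hL : IsLatticeSet ((g : ℚ) • dualBody (simplexHull fun i => toQ (v i)))) (i : Fin 4) :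
    ∃ h : Fin 3 → ℤ, ∀ j, j ≠ i → ∑ k, h k * v j k = -(g : ℤ) := by
  obtain ⟨hA, -, w, hw, hw1, hw0⟩ := hF
  have hgq : (0 : ℚ) < g := by exact_mod_cast hg
  -- barycentric coordinates
  let B : AffineBasis (Fin 4) ℚ (Fin 3 → ℚ) :=
    ⟨fun i => toQ (v i), hA, by
      rw [hA.affineSpan_eq_top_iff_card_eq_finrank_add_one]; simp⟩
  have hB : ∀ j, B j = toQ (v j) := fun j => rfl
  have hlin : ∀ x, B.coord i x = (B.coord i).linear x + B.coord i 0 := fun x => by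
    have := (B.coord i).map_vadd 0 x
    simpa using this
  have hB0 : B.coord i 0 = w i := by
    have h0 : (0 : Fin 3 → ℚ) = Finset.univ.affineCombination ℚ B w := by
      rw [Finset.affineCombination_eq_linear_combination _ _ _ hw1]
      ext k
      simp only [hB]
      simpa using (hw0 k).symm
    rw [h0]
    exact B.coord_apply_combination_of_mem (Finset.mem_univ i) hw1
  let l : Fin 3 → ℚ := fun k => (B.coord i).linear (Pi.single k 1)
  have hl : ∀ x : Fin 3 → ℚ, (B.coord i).linear x = ∑ k, l k * x k := fun x => by
    conv_lhs => rw [← Finset.univ_sum_single x]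
    rw [map_sum]
    refine Finset.sum_congr rfl fun k _ => ?_
    have : (Pi.single k (x k) : Fin 3 → ℚ) = x k • Pi.single k 1 := by
      rw [← Pi.single_smul]; simp
    rw [this, map_smul]; simp [l, mul_comm]
  let u : Fin 3 → ℚ := fun k => l k / w i
  have hu : ∀ x : Fin 3 → ℚ, ∑ k, u k * x k = (B.coord i x - w i) / w i := fun x => by
    rw [hlin, hB0, hl, add_sub_cancel_right, Finset.sum_div]
    exact Finset.sum_congr rfl fun k _ => by simp only [u]; ring
  have hconv : ∀ (y : Fin 3 → ℚ) (r : ℚ), Convex ℚ {x : Fin 3 → ℚ | r ≤ ∑ k, y k * x k} := by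
    intro y r a ha b hb s t hs ht hst
    simp only [Set.mem_ofPred_eq, Pi.add_apply, Pi.smul_apply, smul_eq_mul] at *
    have : ∑ k, y k * (s * a k + t * b k) = s * ∑ k, y k * a k + t * ∑ k, y k * b k := by
      rw [Finset.mul_sum, Finset.mul_sum, ← Finset.sum_add_distrib]
      exact Finset.sum_congr rfl fun k _ => by ring
    rw [this]
    have h1 := mul_le_mul_of_nonneg_left ha hs
    have h2 := mul_le_mul_of_nonneg_left hb ht
    have : r = s * r + t * r := by rw [← add_mul, hst, one_mul]
    linarith
  have huD : u ∈ dualBody (simplexHull fun i => toQ (v i)) := by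
    intro x hx
    have : simplexHull (fun i => toQ (v i)) ⊆ {x : Fin 3 → ℚ | -1 ≤ ∑ k, u k * x k} := by
      apply convexHull_min _ (hconv u _)
      rintro _ ⟨j, rfl⟩
      simp only [Set.mem_ofPred_eq]
      rw [hu, le_div_iff₀ (hw i), ← hB, B.coord_apply]
      split_ifs <;> linarith
    exact this hx
  have hguS : (g : ℚ) • u ∈ (g : ℚ) • dualBody (simplexHull fun i => toQ (v i)) :=
    Set.smul_mem_smul_set huD
  have hge : ∀ s ∈ (g : ℚ) • dualBody (simplexHull fun i => toQ (v i)), ∀ j,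
      -(g : ℚ) ≤ ∑ k, s k * (v j k : ℚ) := by
    rintro _ ⟨t, ht, rfl⟩ j
    have := ht (toQ (v j)) (subset_convexHull ℚ _ ⟨j, rfl⟩)
    have e : ∑ k, ((g : ℚ) • t) k * (v j k : ℚ) = g * ∑ k, t k * toQ (v j) k := by
      rw [Finset.mul_sum]; exact Finset.sum_congr rfl fun k _ => by simp [toQ, mul_assoc]
    simp only [e]
    nlinarith
  by_contra hcon
  push Not at hcon
  -- the functional
  let y : Fin 3 → ℚ := fun k => ∑ j ∈ Finset.univ.erase i, (v j k : ℚ)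
  have hy : ∀ s : Fin 3 → ℚ, ∑ k, y k * s k =
      ∑ j ∈ Finset.univ.erase i, ∑ k, s k * (v j k : ℚ) := fun s => by
    rw [Finset.sum_comm]
    refine Finset.sum_congr rfl fun k _ => ?_
    simp only [y]
    rw [Finset.sum_mul]
    exact Finset.sum_congr rfl fun j _ => by ring
  have hconv' : Convex ℚ {x : Fin 3 → ℚ | -(3 * g : ℚ) < ∑ k, y k * x k} := by
    intro a ha b hb s t hs ht hst
    simp only [Set.mem_ofPred_eq, Pi.add_apply, Pi.smul_apply, smul_eq_mul] at *
    have : ∑ k, y k * (s * a k + t * b k) = s * ∑ k, y k * a k + t * ∑ k, y k * b k := by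
      rw [Finset.mul_sum, Finset.mul_sum, ← Finset.sum_add_distrib]
      exact Finset.sum_congr rfl fun k _ => by ring
    rw [this]
    have hr : -(3 * g : ℚ) = s * -(3 * g : ℚ) + t * -(3 * g : ℚ) := by
      rw [← add_mul, hst, one_mul]
    rcases hs.eq_or_lt with h0 | h0
    · subst h0
      have : t = 1 := by linarith
      subst this; linarith
    · have h1 := mul_lt_mul_of_pos_left ha h0
      have h2 := mul_le_mul_of_nonneg_left hb.le ht
      linarith
  have hsub : convexHull ℚ {x ∈ (g : ℚ) • dualBody (simplexHull fun i => toQ (v i)) |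
      ∀ j, ∃ z : ℤ, x j = (z : ℚ)} ⊆ {x : Fin 3 → ℚ | -(3 * g : ℚ) < ∑ k, y k * x k} := by
    apply convexHull_min _ hconv'
    rintro s ⟨hs, hz⟩
    choose z hz using hz
    obtain ⟨j, hj, hne⟩ := hcon z
    simp only [Set.mem_ofPred_eq]
    rw [hy]
    have : ∑ j ∈ Finset.univ.erase i, (-(g : ℚ)) <
        ∑ j ∈ Finset.univ.erase i, ∑ k, s k * (v j k : ℚ) := by
      apply Finset.sum_lt_sum (fun j _ => hge s hs j)
      refine ⟨j, by simp [hj], lt_of_le_of_ne (hge s hs j) fun h => hne ?_⟩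
      have : ((∑ k, z k * v j k : ℤ) : ℚ) = ((-(g : ℤ) : ℤ) : ℚ) := by
        push_cast
        rw [h]
        exact Finset.sum_congr rfl fun k _ => by rw [hz]
      exact_mod_cast this
    simpa using this
  have hmem := hsub (hL ▸ hguS)
  simp only [Set.mem_ofPred_eq] at hmem
  rw [hy] at hmem
  have : ∑ j ∈ Finset.univ.erase i, ∑ k, ((g : ℚ) • u) k * (v j k : ℚ) =
      ∑ j ∈ Finset.univ.erase i, (-(g : ℚ)) := by
    refine Finset.sum_congr rfl fun j hj => ?_
    have e : ∑ k, ((g : ℚ) • u) k * (v j k : ℚ) = g * ∑ k, u k * toQ (v j) k := by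
      rw [Finset.mul_sum]; exact Finset.sum_congr rfl fun k _ => by simp [toQ, mul_assoc]
    rw [e, hu, ← hB, B.coord_apply_ne (Finset.ne_of_mem_erase hj).symm]
    have := (hw i).ne'
    field_simp
    ring
  rw [this] at hmem
  simp at hmem

/-- boolean check for the unit fraction enumeration -/
def chk (g a b c : ℕ) : Bool :=
  let num := g * (a * b * c)
  let den := a * b * c - g * (b * c + a * c + a * b)
  den == 0 || num % den != 0 ||
    (let d := num / den
     let L := Nat.lcm a (Nat.lcm b (Nat.lcm c d))
     let p := a * b * c * d
     decide (p < 16 * g ^ 2 * L ^ 2) ||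
       (a == 4 * g && b == 4 * g && c == 4 * g && d == 4 * g && p == 16 * g ^ 2 * L ^ 2))

lemma chk1 : ∀ a < 9, ∀ b < 19, ∀ c < 85, chk 1 a b c = true := by decide +kernel
lemma chk2 : ∀ a < 9, ∀ b < 19, ∀ c < 85, chk 2 a b c = true := by decide +kernel

lemma sorted_bound (g : ℕ) (hg : g = 1 ∨ g = 2) (a b c d : ℕ) (ha : 0 < a) (hab : a ≤ b)
    (hbc : b ≤ c) (hcd : c ≤ d)
    (h : g * (b * c * d + a * c * d + a * b * d + a * b * c) = a * b * c * d) :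
    a * b * c * d ≤ 16 * g ^ 2 * (Nat.lcm a (Nat.lcm b (Nat.lcm c d))) ^ 2 ∧
    (a * b * c * d = 16 * g ^ 2 * (Nat.lcm a (Nat.lcm b (Nat.lcm c d))) ^ 2 →
      a = 4 * g ∧ b = 4 * g ∧ c = 4 * g ∧ d = 4 * g) := by
  have hb : 0 < b := by omega
  have hc : 0 < c := by omega
  have hd : 0 < d := by omega
  have g0 : 0 < g := by omega
  have g2 : g ≤ 2 := by omega
  -- bound a
  have ha8 : a ≤ 4 * g := by
    by_contra hlt
    push Not at hlt
    have h1 : a * c * d ≤ b * c * d := by gcongr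
    have h2 : a * b * d ≤ b * c * d := by
      calc a * b * d ≤ c * b * d := by gcongr; omega
        _ = _ := by ring
    have h3 : a * b * c ≤ b * c * d := by
      calc a * b * c ≤ d * b * c := by gcongr; omega
        _ = _ := by ring
    have h4 : 4 * g * (b * c * d) < a * (b * c * d) := by
      apply Nat.mul_lt_mul_of_pos_right hlt; positivity
    have h5 : g * (b * c * d + a * c * d + a * b * d + a * b * c) ≤ g * (4 * (b * c * d)) := by
      apply Nat.mul_le_mul_left; omega
    nlinarith
  have hag : g < a := by
    by_contra hlt
    push Not at hlt
    have h1 : a * (b * c * d) ≤ g * (b * c * d) := by gcongr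
    have h2 : 0 < g * (a * c * d) := by positivity
    have h3 : 0 < g * (a * b * d) := by positivity
    have h4 : 0 < g * (a * b * c) := by positivity
    have h5 : g * (b * c * d) + g * (a * c * d) + g * (a * b * d) + g * (a * b * c) =
      a * (b * c * d) := by linarith
    omega
  -- bound b
  have hb' : (a - g) * b ≤ 3 * g * a := by
    obtain ⟨k, rfl⟩ := Nat.exists_eq_add_of_lt hag
    have e : g + k + 1 - g = k + 1 := by omega
    rw [e]
    by_contra hlt
    push Not at hlt
    set A := g + k + 1 with hA
    have e2 : (k + 1) * b * (c * d) = g * A * (c * d + b * d + b * c) := by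
      have : A * b * c * d = g * (b * c * d) + (k + 1) * b * (c * d) := by rw [hA]; ring
      nlinarith
    have h2 : b * d ≤ c * d := by gcongr
    have h3 : b * c ≤ c * d := by
      calc b * c ≤ d * c := by gcongr; omega
        _ = _ := by ring
    have h4 : 3 * g * A * (c * d) < (k + 1) * b * (c * d) := by
      apply Nat.mul_lt_mul_of_pos_right hlt; positivity
    have h5 : g * A * (c * d + b * d + b * c) ≤ g * A * (3 * (c * d)) := by
      apply Nat.mul_le_mul_left; omega
    nlinarith
  have hb18 : b < 19 := by
    rcases hg with rfl | rfl <;> interval_cases a <;> omega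
  -- bound c
  have hab2 : g * (a + b) < a * b := by
    have h0 : g * (a + b) * (c * d) + g * (a * b) * (c + d) = a * b * (c * d) := by nlinarith
    have h1 : 0 < g * (a * b) * (c + d) := by positivity
    have : g * (a + b) * (c * d) < a * b * (c * d) := by omega
    exact Nat.lt_of_mul_lt_mul_right this
  have hc' : (a * b - g * (a + b)) * c ≤ 2 * g * (a * b) := by
    obtain ⟨k, hk⟩ := Nat.exists_eq_add_of_lt hab2
    have e : a * b - g * (a + b) = k + 1 := by omega
    rw [e]
    by_contra hlt
    push Not at hlt
    have e2 : (k + 1) * c * d = g * (a * b) * (c + d) := by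
      have : a * b * c * d = g * (a + b) * c * d + (k + 1) * c * d := by rw [hk]; ring
      nlinarith
    have h4 : 2 * g * (a * b) * d < (k + 1) * c * d := by
      apply Nat.mul_lt_mul_of_pos_right hlt hd
    have h5 : g * (a * b) * (c + d) ≤ g * (a * b) * (2 * d) := by
      apply Nat.mul_le_mul_left; omega
    nlinarith
  have hc84 : c < 85 := by
    clear h
    rcases hg with rfl | rfl <;> interval_cases a <;> interval_cases b <;> omega
  have hchk : chk g a b c = true := by
    rcases hg with rfl | rfl
    · exact chk1 a (by omega) b hb18 c hc84
    · exact chk2 a (by omega) b hb18 c hc84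
  -- den * d = num
  have hden : (a * b * c - g * (b * c + a * c + a * b)) * d = g * (a * b * c) := by
    rw [Nat.sub_mul]
    have : a * b * c * d = g * (b * c + a * c + a * b) * d + g * (a * b * c) := by nlinarith
    omega
  have hdenpos : 0 < a * b * c - g * (b * c + a * c + a * b) := by
    rcases Nat.eq_zero_or_pos (a * b * c - g * (b * c + a * c + a * b)) with h0 | h0
    · rw [h0] at hden
      have : 0 < g * (a * b * c) := by positivity
      omega
    · exact h0
  have hdv : g * (a * b * c) / (a * b * c - g * (b * c + a * c + a * b)) = d :=
    Nat.div_eq_of_eq_mul_right hdenpos hden.symm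
  have hmod : g * (a * b * c) % (a * b * c - g * (b * c + a * c + a * b)) = 0 := by
    rw [← hden]; simp
  simp only [chk, hdv, hmod] at hchk
  simp only [Bool.or_eq_true, beq_iff_eq, bne_iff_ne, ne_eq, not_true_eq_false, or_false,
    decide_eq_true_eq, Bool.and_eq_true] at hchk
  rcases hchk with h0 | h0 | h0
  · omega
  · exact ⟨h0.le, fun h => absurd h h0.ne⟩
  · exact ⟨h0.2.le, fun _ => ⟨h0.1.1.1.1, h0.1.1.1.2, h0.1.1.2, h0.1.2⟩⟩

lemma lcm4 (A : Fin 4 → ℕ) :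
    Nat.lcm (A 0) (Nat.lcm (A 1) (Nat.lcm (A 2) (A 3))) = Finset.univ.lcm A := by
  apply Nat.dvd_antisymm
  · refine Nat.lcm_dvd ?_ (Nat.lcm_dvd ?_ (Nat.lcm_dvd ?_ ?_)) <;>
      exact Finset.dvd_lcm (Finset.mem_univ _)
  · apply Finset.lcm_dvd
    intro i _
    fin_cases i
    · exact Nat.dvd_lcm_left _ _
    · exact (Nat.dvd_lcm_left _ _).trans (Nat.dvd_lcm_right _ _)
    · exact ((Nat.dvd_lcm_left _ _).trans (Nat.dvd_lcm_right _ _)).trans (Nat.dvd_lcm_right _ _)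
    · exact ((Nat.dvd_lcm_right _ _).trans (Nat.dvd_lcm_right _ _)).trans (Nat.dvd_lcm_right _ _)

lemma unit_frac (g : ℕ) (hg : g = 1 ∨ g = 2) (A : Fin 4 → ℕ) (hA : ∀ i, 0 < A i)
    (h : ∑ i, (g : ℚ) / A i = 1) :
    ∏ i, A i ≤ 16 * g ^ 2 * (Finset.univ.lcm A) ^ 2 ∧
    (∏ i, A i = 16 * g ^ 2 * (Finset.univ.lcm A) ^ 2 → ∀ i, A i = 4 * g) := by
  set σ := Tuple.sort A
  have hm := Tuple.monotone_sort A
  have hl : Finset.univ.lcm A = Finset.univ.lcm (A ∘ σ) := by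
    apply Nat.dvd_antisymm
    · apply Finset.lcm_dvd
      intro i _
      have := Finset.dvd_lcm (f := A ∘ σ) (Finset.mem_univ (σ.symm i))
      simpa using this
    · apply Finset.lcm_dvd
      intro i _
      exact Finset.dvd_lcm (f := A) (Finset.mem_univ (σ i))
  rw [hl, ← lcm4, ← Equiv.prod_comp σ A]
  rw [← Equiv.sum_comp σ (fun i => (g : ℚ) / A i)] at h
  rw [Fin.prod_univ_four]
  rw [Fin.sum_univ_four] at h
  have q0 : ((A (σ 0) : ℕ) : ℚ) ≠ 0 := by exact_mod_cast (hA _).ne'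
  have q1 : ((A (σ 1) : ℕ) : ℚ) ≠ 0 := by exact_mod_cast (hA _).ne'
  have q2 : ((A (σ 2) : ℕ) : ℚ) ≠ 0 := by exact_mod_cast (hA _).ne'
  have q3 : ((A (σ 3) : ℕ) : ℚ) ≠ 0 := by exact_mod_cast (hA _).ne'
  have key : g * (A (σ 1) * A (σ 2) * A (σ 3) + A (σ 0) * A (σ 2) * A (σ 3) +
      A (σ 0) * A (σ 1) * A (σ 3) + A (σ 0) * A (σ 1) * A (σ 2)) =
      A (σ 0) * A (σ 1) * A (σ 2) * A (σ 3) := by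
    field_simp at h
    have h' : (g : ℚ) * (A (σ 1) * A (σ 2) * A (σ 3) + A (σ 0) * A (σ 2) * A (σ 3) +
      A (σ 0) * A (σ 1) * A (σ 3) + A (σ 0) * A (σ 1) * A (σ 2)) =
      A (σ 0) * A (σ 1) * A (σ 2) * A (σ 3) := by linarith
    exact_mod_cast h'
  have := sorted_bound g hg _ _ _ _ (hA (σ 0)) (hm (by decide : (0 : Fin 4) ≤ 1))
    (hm (by decide : (1 : Fin 4) ≤ 2)) (hm (by decide : (2 : Fin 4) ≤ 3)) key
  refine ⟨this.1, fun he => ?_⟩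
  obtain ⟨h0, h1, h2, h3⟩ := this.2 he
  intro i
  obtain ⟨j, rfl⟩ := σ.surjective i
  fin_cases j
  · exact h0
  · exact h1
  · exact h2
  · exact h3

/-- signed maximal minors -/
def mn (x : Fin 4 → Fin 3 → ℤ) : Fin 4 → ℤ :=
  ![d3 (x 1) (x 2) (x 3), -d3 (x 0) (x 2) (x 3), d3 (x 0) (x 1) (x 3), -d3 (x 0) (x 1) (x 2)]

lemma mn_rel (x : Fin 4 → Fin 3 → ℤ) (k : Fin 3) : ∑ i, mn x i * x i k = 0 := by
  rw [Fin.sum_univ_four]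
  fin_cases k <;> simp [mn, d3] <;> ring

lemma d3_mul (b : Fin 3 → Fin 3 → ℤ) (x y z : Fin 3 → ℤ) :
    d3 (∑ k, x k • b k) (∑ k, y k • b k) (∑ k, z k • b k) =
      d3 (b 0) (b 1) (b 2) * d3 x y z := by
  simp only [d3, Fin.sum_univ_three, Pi.add_apply, Pi.smul_apply, smul_eq_mul]
  ring

lemma d3_pair (x y z a b c : Fin 3 → ℤ) :
    d3 x y z * d3 a b c =
      d3 ![∑ k, x k * a k, ∑ k, x k * b k, ∑ k, x k * c k]
        ![∑ k, y k * a k, ∑ k, y k * b k, ∑ k, y k * c k]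
        ![∑ k, z k * a k, ∑ k, z k * b k, ∑ k, z k * c k] := by
  simp only [d3, Fin.sum_univ_three]
  simp
  ring

lemma cauchy_binet (n : Fin 3 → Fin 4 → ℤ) (c : Fin 4 → Fin 3 → ℤ) :
    ∑ i, mn (fun j k => n k j) i * mn c i =
      d3 (fun l => ∑ j, n 0 j * c j l) (fun l => ∑ j, n 1 j * c j l)
        (fun l => ∑ j, n 2 j * c j l) := by
  simp only [Fin.sum_univ_four, mn, d3]
  simp
  ring

lemma d3_cramer (m : ℤ) (x y z u : Fin 3 → ℤ) (hx : m ∣ ∑ k, x k * u k)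
    (hy : m ∣ ∑ k, y k * u k) (hz : m ∣ ∑ k, z k * u k) (k : Fin 3) : m ∣ d3 x y z * u k := by
  obtain ⟨a, ha⟩ := hx
  obtain ⟨b, hb⟩ := hy
  obtain ⟨c, hc⟩ := hz
  rw [Fin.sum_univ_three] at ha hb hc
  fin_cases k
  · refine ⟨a * (y 1 * z 2 - y 2 * z 1) - b * (x 1 * z 2 - x 2 * z 1) +
      c * (x 1 * y 2 - x 2 * y 1), ?_⟩
    simp only [d3, Fin.zero_eta, Fin.mk_one, Fin.reduceFinMk]
    linear_combination (y 1 * z 2 - y 2 * z 1) * ha - (x 1 * z 2 - x 2 * z 1) * hb +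
      (x 1 * y 2 - x 2 * y 1) * hc
  · refine ⟨-a * (y 0 * z 2 - y 2 * z 0) + b * (x 0 * z 2 - x 2 * z 0) -
      c * (x 0 * y 2 - x 2 * y 0), ?_⟩
    simp only [d3, Fin.zero_eta, Fin.mk_one, Fin.reduceFinMk]
    linear_combination -(y 0 * z 2 - y 2 * z 0) * ha + (x 0 * z 2 - x 2 * z 0) * hb -
      (x 0 * y 2 - x 2 * y 0) * hc
  · refine ⟨a * (y 0 * z 1 - y 1 * z 0) - b * (x 0 * z 1 - x 1 * z 0) +
      c * (x 0 * y 1 - x 1 * y 0), ?_⟩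
    simp only [d3, Fin.zero_eta, Fin.mk_one, Fin.reduceFinMk]
    linear_combination (y 0 * z 1 - y 1 * z 0) * ha - (x 0 * z 1 - x 1 * z 0) * hb +
      (x 0 * y 1 - x 1 * y 0) * hc

lemma mn_pair (g : ℤ) (v h : Fin 4 → Fin 3 → ℤ) (A : Fin 4 → ℤ)
    (hp : ∀ i j, ∑ k, h i k * v j k = (if i = j then A i else 0) - g)
    (he : g * (A 1 * A 2 * A 3 + A 0 * A 2 * A 3 + A 0 * A 1 * A 3 + A 0 * A 1 * A 2) =
      A 0 * A 1 * A 2 * A 3) (i : Fin 4) :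
    mn h i * mn v i * A i * A i = g * ∏ j, A j := by
  rw [Fin.prod_univ_four]
  fin_cases i
  · simp only [mn, Fin.zero_eta, Matrix.cons_val]
    rw [d3_pair]
    simp only [hp, d3]
    simp
    linear_combination -(A 0) * he
  · simp only [mn, Fin.mk_one, Matrix.cons_val]
    rw [neg_mul_neg, d3_pair]
    simp only [hp, d3]
    simp
    linear_combination -(A 1) * he
  · simp only [mn, Fin.reduceFinMk, Matrix.cons_val]
    rw [d3_pair]
    simp only [hp, d3]
    simp
    linear_combination -(A 2) * he
  · simp only [mn, Fin.reduceFinMk, Matrix.cons_val]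
    rw [neg_mul_neg, d3_pair]
    simp only [hp, d3]
    simp
    linear_combination -(A 3) * he

lemma core (g : ℤ) (hg : 0 < g) (v h : Fin 4 → Fin 3 → ℤ) (A : Fin 4 → ℤ) (hA : ∀ i, 0 < A i)
    (hp : ∀ i j, ∑ k, h i k * v j k = (if i = j then A i else 0) - g)
    (he : g * (A 1 * A 2 * A 3 + A 0 * A 2 * A 3 + A 0 * A 1 * A 3 + A 0 * A 1 * A 2) =
      A 0 * A 1 * A 2 * A 3) :
    ∃ (K n : Fin 4 → ℤ) (W N β : ℤ), multOf v = β.natAbs ∧ W ≠ 0 ∧ (∀ i, K i * A i = g * W) ∧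
      N * β * g * W ^ 2 = ∏ i, A i ∧ (∀ i, mn h i = N * K i) ∧ ∑ i, n i * K i = 1 := by
  have hprod : 0 < ∏ i, A i := Finset.prod_pos fun i _ => hA i
  have hpair := mn_pair g v h A hp he
  have hd : d3 (v 1) (v 2) (v 3) ≠ 0 := by
    intro h0
    have := hpair 0
    simp only [mn, Matrix.cons_val_zero, h0] at this
    have h1 : 0 < g * ∏ i, A i := mul_pos hg hprod
    simp at this
    rcases this with h2 | h2
    · exact hg.ne' h2
    · exact hprod.ne' h2
  obtain ⟨b, c, n, hm, hv, hn⟩ := lat_basis v hd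
  have hmv : ∀ i, mn v i = d3 (b 0) (b 1) (b 2) * mn c i := by
    intro i
    fin_cases i <;> simp only [mn, Fin.zero_eta, Fin.mk_one, Fin.reduceFinMk, Matrix.cons_val] <;>
      simp only [hv 0, hv 1, hv 2, hv 3, d3_mul] <;> ring
  have hK1 : ∑ i, mn (fun j k => n k j) i * mn c i = 1 := by
    rw [cauchy_binet]
    simp only [hn, d3]
    simp
  have hKA : ∀ i, mn c i * A i = g * ∑ j, mn c j := by
    intro i
    have h1 : ∀ k, ∑ j, mn c j * v j k = 0 := by
      intro k
      have h2 : ∀ j, v j k = ∑ l, c j l * b l k := fun j => by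
        rw [hv j]; simp
      simp only [h2, Finset.mul_sum]
      rw [Finset.sum_comm]
      apply Finset.sum_eq_zero
      intro l _
      have := mn_rel c l
      calc ∑ j, mn c j * (c j l * b l k) = (∑ j, mn c j * c j l) * b l k := by
            rw [Finset.sum_mul]; exact Finset.sum_congr rfl fun j _ => by ring
        _ = 0 := by rw [this, zero_mul]
    have h3 : ∑ j, mn c j * ∑ k, h i k * v j k = 0 := by
      simp only [Finset.mul_sum]
      rw [Finset.sum_comm]
      apply Finset.sum_eq_zero
      intro k _
      calc ∑ j, mn c j * (h i k * v j k) = h i k * (∑ j, mn c j * v j k) := by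
            rw [Finset.mul_sum]; exact Finset.sum_congr rfl fun j _ => by ring
        _ = 0 := by rw [h1, mul_zero]
    simp only [hp, mul_sub, Finset.sum_sub_distrib] at h3
    simp only [mul_ite, mul_zero, Finset.sum_ite_eq, Finset.mem_univ, if_true,
      ← Finset.sum_mul] at h3
    linarith
  set β := d3 (b 0) (b 1) (b 2)
  set K := mn c
  set W := ∑ j, K j
  set m := mn (fun j k => n k j)
  have hW : W ≠ 0 := by
    intro h0
    have : ∀ i, K i = 0 := fun i => by
      have := hKA i
      rw [h0, mul_zero] at this
      rcases mul_eq_zero.1 this with h | h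
      · exact h
      · exact absurd h (hA i).ne'
    simp [this] at hK1
  have hE : ∀ i, mn h i * (β * g * W ^ 2) = (∏ j, A j) * K i := by
    intro i
    have h1 := hpair i
    rw [hmv i] at h1
    have h2 : (mn h i * (β * g * W ^ 2)) * g = ((∏ j, A j) * K i) * g := by
      linear_combination K i * h1 - (mn h i * β) * (K i * A i + g * W) * hKA i
    exact mul_right_cancel₀ hg.ne' h2
  have hN : (∑ i, m i * mn h i) * β * g * W ^ 2 = ∏ j, A j := by
    calc _ = ∑ i, m i * (mn h i * (β * g * W ^ 2)) := by
            rw [Finset.sum_mul, Finset.sum_mul, Finset.sum_mul]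
            exact Finset.sum_congr rfl fun i _ => by ring
      _ = (∏ j, A j) * ∑ i, m i * K i := by
            rw [Finset.mul_sum]
            exact Finset.sum_congr rfl fun i _ => by rw [hE]; ring
      _ = _ := by rw [hK1, mul_one]
  refine ⟨K, m, W, ∑ i, m i * mn h i, β, hm, hW, hKA, hN, fun i => ?_, hK1⟩
  have hnz : β * g * W ^ 2 ≠ 0 := by
    intro h0
    rw [mul_assoc, mul_assoc, ← mul_assoc β, h0, mul_zero] at hN
    exact hprod.ne hN
  apply mul_right_cancel₀ hnz
  rw [hE i, ← hN]; ring

lemma not_even_of_prim (u : Fin 3 → ℤ) (hu : IsPrimitive u) (h : ∀ k, (2 : ℤ) ∣ u k) : False := by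
  have : (2 : ℤ) ∣ Finset.univ.gcd u := Finset.dvd_gcd fun k _ => h k
  rw [hu] at this
  norm_num at this

lemma N_even (v h : Fin 4 → Fin 3 → ℤ) (A : Fin 4 → ℤ)
    (hprim : ∀ i, IsPrimitive (v i))
    (hp : ∀ i j, ∑ k, h i k * v j k = (if i = j then A i else 0) - 2)
    (he : 2 * (A 1 * A 2 * A 3 + A 0 * A 2 * A 3 + A 0 * A 1 * A 3 + A 0 * A 1 * A 2) =
      A 0 * A 1 * A 2 * A 3) (N : ℤ) (K n : Fin 4 → ℤ) (hN : ∀ i, mn h i = N * K i)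
    (hK : ∑ i, n i * K i = 1) : 2 ∣ N := by
  have : ∃ j, (2 : ℤ) ∣ A j := by
    have h1 : (2 : ℤ) ∣ ∏ j, A j := by
      rw [Fin.prod_univ_four, ← he]; exact dvd_mul_right _ _
    obtain ⟨j, -, hj⟩ := (Int.prime_two.dvd_finsetProd_iff _).1 h1
    exact ⟨j, hj⟩
  obtain ⟨j, hj⟩ := this
  have hev : ∀ i, (2 : ℤ) ∣ ∑ k, h i k * v j k := by
    intro i
    rw [hp]
    apply dvd_sub _ (dvd_refl _)
    split_ifs with hij
    · rw [hij]; exact hj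
    · exact dvd_zero _
  have hm : ∀ i k, (2 : ℤ) ∣ mn h i * v j k := by
    intro i k
    fin_cases i <;> simp only [mn, Fin.zero_eta, Fin.mk_one, Fin.reduceFinMk, Matrix.cons_val]
    · exact d3_cramer 2 _ _ _ _ (hev _) (hev _) (hev _) k
    · rw [neg_mul, dvd_neg]; exact d3_cramer 2 _ _ _ _ (hev _) (hev _) (hev _) k
    · exact d3_cramer 2 _ _ _ _ (hev _) (hev _) (hev _) k
    · rw [neg_mul, dvd_neg]; exact d3_cramer 2 _ _ _ _ (hev _) (hev _) (hev _) k
  by_contra hodd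
  apply not_even_of_prim (v j) (hprim j)
  intro k
  have h2 : (2 : ℤ) ∣ N * v j k := by
    have : N * v j k = ∑ i, n i * (mn h i * v j k) := by
      calc N * v j k = (∑ i, n i * K i) * (N * v j k) := by rw [hK, one_mul]
        _ = _ := by
          rw [Finset.sum_mul]; exact Finset.sum_congr rfl fun i _ => by rw [hN]; ring
    rw [this]
    exact Finset.dvd_sum fun i _ => (hm i k).mul_left _
  exact (Int.prime_two.dvd_or_dvd h2).resolve_left hodd

lemma row_dot (U : Matrix (Fin 3) (Fin 3) ℤ) (x p : Fin 3 → ℤ)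
    (h : ∀ r, ∑ k, U r k * x k = p r) : U.mulVec x = p := by
  ext r; rw [← h r]; rfl

lemma iso_one (v h : Fin 4 → Fin 3 → ℤ)
    (hp : ∀ i j, ∑ k, h i k * v j k = (if i = j then 4 else 0) - 1)
    (hd : IsUnit (d3 (h 1) (h 2) (h 3))) :
    IsIsomorphicTo v ![![1, 0, 0], ![1, 4, 0], ![1, 0, 4], ![-3, -4, -4]] := by
  refine ⟨Matrix.of ![-h 3, h 1 - h 3, h 2 - h 3], 1, ?_, ?_⟩
  · have : (Matrix.of ![-h 3, h 1 - h 3, h 2 - h 3]).det = - d3 (h 1) (h 2) (h 3) := by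
      rw [d3_eq_det]; simp [d3]; ring
    rw [this]; exact hd.neg
  · intro j
    apply row_dot
    have h1 := hp 1 j
    have h2 := hp 2 j
    have h3 := hp 3 j
    rw [Fin.sum_univ_three] at h1 h2 h3
    intro r
    rw [Fin.sum_univ_three]
    fin_cases j <;> fin_cases r <;> simp at h1 h2 h3 ⊢ <;> linarith

lemma iso_two_zero (v h : Fin 4 → Fin 3 → ℤ)
    (hp : ∀ i j, ∑ k, h i k * v j k = (if i = j then 8 else 0) - 2)
    (hd : d3 (h 1) (h 2) (h 3) = 2 ∨ d3 (h 1) (h 2) (h 3) = -2)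
    (hs : ∀ k, h 0 k + h 1 k + h 2 k + h 3 k = 0)
    (he : ∀ k, (2 : ℤ) ∣ h 0 k) :
    IsIsomorphicTo v ![![1, 0, 0], ![5, 8, 0], ![5, 0, 8], ![-11, -8, -8]] := by
  choose x hx using he
  refine ⟨Matrix.of ![fun k => -x k - 2 * h 3 k, h 1 - h 3, h 2 - h 3], 1, ?_, ?_⟩
  · have : 2 * (Matrix.of ![fun k => -x k - 2 * h 3 k, h 1 - h 3, h 2 - h 3]).det =
        - d3 (h 1) (h 2) (h 3) := by
      have e0 : x 0 * 2 = - (h 1 0 + h 2 0 + h 3 0) := by linarith [hs 0, hx 0]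
      have e1 : x 1 * 2 = - (h 1 1 + h 2 1 + h 3 1) := by linarith [hs 1, hx 1]
      have e2 : x 2 * 2 = - (h 1 2 + h 2 2 + h 3 2) := by linarith [hs 2, hx 2]
      rw [d3_eq_det]; simp [d3]
      linear_combination
        -((h 1 1 - h 3 1) * (h 2 2 - h 3 2) - (h 1 2 - h 3 2) * (h 2 1 - h 3 1)) * e0
        + ((h 1 0 - h 3 0) * (h 2 2 - h 3 2) - (h 1 2 - h 3 2) * (h 2 0 - h 3 0)) * e1
        - ((h 1 0 - h 3 0) * (h 2 1 - h 3 1) - (h 1 1 - h 3 1) * (h 2 0 - h 3 0)) * e2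
    rw [Int.isUnit_iff]
    omega
  · intro j
    apply row_dot
    have h0 := hp 0 j
    have h1 := hp 1 j
    have h2 := hp 2 j
    have h3 := hp 3 j
    rw [Fin.sum_univ_three] at h0 h1 h2 h3
    rw [hx 0, hx 1, hx 2] at h0
    intro r
    rw [Fin.sum_univ_three]
    fin_cases j <;> fin_cases r <;> simp at h0 h1 h2 h3 ⊢ <;> linarith

lemma iso_perm (v w : Fin 4 → Fin 3 → ℤ) (τ : Equiv.Perm (Fin 4))
    (h : IsIsomorphicTo (v ∘ τ) w) : IsIsomorphicTo v w := by
  obtain ⟨U, σ, hU, hv⟩ := h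
  refine ⟨U, τ.symm.trans σ, hU, fun i => ?_⟩
  have := hv (τ.symm i)
  simpa using this

lemma exists_comb (x y z : Fin 3 → ℤ) (h : (2 : ℤ) ∣ d3 x y z) :
    ∃ a b c : ℤ, (a = 0 ∨ a = 1) ∧ (b = 0 ∨ b = 1) ∧ (c = 0 ∨ c = 1) ∧
      ¬ (a = 0 ∧ b = 0 ∧ c = 0) ∧ ∀ k, (2 : ℤ) ∣ a * x k + b * y k + c * z k := by
  let M : Matrix (Fin 3) (Fin 3) ℤ := Matrix.of ![x, y, z]
  have hdet : (M.map (Int.castRingHom (ZMod 2))).det = 0 := by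
    have h1 : (Int.castRingHom (ZMod 2)) M.det = (M.map (Int.castRingHom (ZMod 2))).det :=
      RingHom.map_det _ _
    rw [← h1]
    have h2 : M.det = d3 x y z := d3_eq_det _
    rw [h2]
    exact (ZMod.intCast_zmod_eq_zero_iff_dvd _ 2).2 (by exact_mod_cast h)
  have : Fact (Nat.Prime 2) := ⟨Nat.prime_two⟩
  obtain ⟨u, hu, hu0⟩ := Matrix.exists_vecMul_eq_zero_iff.2 hdet
  have hz : ∀ t : ZMod 2, ∃ a : ℤ, (a = 0 ∨ a = 1) ∧ (a : ZMod 2) = t := by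
    intro t
    fin_cases t
    · exact ⟨0, Or.inl rfl, Int.cast_zero⟩
    · exact ⟨1, Or.inr rfl, Int.cast_one⟩
  obtain ⟨a, ha, ha'⟩ := hz (u 0)
  obtain ⟨b, hb, hb'⟩ := hz (u 1)
  obtain ⟨c, hc, hc'⟩ := hz (u 2)
  refine ⟨a, b, c, ha, hb, hc, ?_, ?_⟩
  · rintro ⟨rfl, rfl, rfl⟩
    apply hu
    ext i
    fin_cases i
    · simpa using congrArg ZMod.val ha'.symm
    · simpa using congrArg ZMod.val hb'.symm
    · simpa using congrArg ZMod.val hc'.symm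
  · intro k
    have := congrFun hu0 k
    simp only [Matrix.vecMul, dotProduct, Fin.sum_univ_three, ← ha', ← hb', ← hc'] at this
    have h2 : ((a * x k + b * y k + c * z k : ℤ) : ZMod 2) = 0 := by
      push_cast
      simpa [M] using this
    have := (ZMod.intCast_zmod_eq_zero_iff_dvd _ 2).1 h2
    exact_mod_cast this

lemma no_pair (v h : Fin 4 → Fin 3 → ℤ) (hprim : ∀ i, IsPrimitive (v i))
    (hp : ∀ i j, ∑ k, h i k * v j k = (if i = j then 8 else 0) - 2) (a b c : Fin 4)
    (hd : d3 (h a) (h b) (h c) = 2 ∨ d3 (h a) (h b) (h c) = -2)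
    (he : ∀ k, (2 : ℤ) ∣ h a k + h b k) : False := by
  choose x hx using he
  have h1 : 2 * d3 x (h b) (h c) = d3 (h a) (h b) (h c) := by
    have e0 := hx 0
    have e1 := hx 1
    have e2 := hx 2
    simp only [d3]
    linear_combination -(h b 1 * h c 2 - h b 2 * h c 1) * e0
      + (h b 0 * h c 2 - h b 2 * h c 0) * e1 - (h b 0 * h c 1 - h b 1 * h c 0) * e2
  have hev : ∀ i, (2 : ℤ) ∣ ∑ k, h i k * v 0 k := by
    intro i; rw [hp]; split_ifs <;> norm_num
  have hx0 : (2 : ℤ) ∣ ∑ k, x k * v 0 k := by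
    have e : 2 * ∑ k, x k * v 0 k = (∑ k, h a k * v 0 k) + ∑ k, h b k * v 0 k := by
      rw [Finset.mul_sum, ← Finset.sum_add_distrib]
      exact Finset.sum_congr rfl fun k _ => by linear_combination (- v 0 k) * hx k
    rw [hp, hp] at e
    split_ifs at e <;> omega
  apply not_even_of_prim (v 0) (hprim 0)
  intro k
  have := d3_cramer 2 _ _ _ _ hx0 (hev b) (hev c) k
  have h2 : d3 x (h b) (h c) = 1 ∨ d3 x (h b) (h c) = -1 := by omega
  rcases h2 with h2 | h2 <;> rw [h2] at this <;> omega

lemma iso_two (v h : Fin 4 → Fin 3 → ℤ) (hprim : ∀ i, IsPrimitive (v i))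
    (hp : ∀ i j, ∑ k, h i k * v j k = (if i = j then 8 else 0) - 2)
    (e : ℤ) (he : e = 2 ∨ e = -2) (hd : ∀ i, mn h i = e) :
    IsIsomorphicTo v ![![1, 0, 0], ![5, 8, 0], ![5, 0, 8], ![-11, -8, -8]] := by
  have hs : ∀ k, h 0 k + h 1 k + h 2 k + h 3 k = 0 := by
    intro k
    have := mn_rel h k
    simp only [hd, ← Finset.mul_sum, Fin.sum_univ_four] at this
    rcases mul_eq_zero.1 this with h0 | h0
    · omega
    · exact h0
  have d0 : d3 (h 1) (h 2) (h 3) = e := hd 0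
  have d1 : -d3 (h 0) (h 2) (h 3) = e := hd 1
  have d2 : d3 (h 0) (h 1) (h 3) = e := hd 2
  have d3' : -d3 (h 0) (h 1) (h 2) = e := hd 3
  have hfin : ∀ i, (∀ k, (2 : ℤ) ∣ h i k) →
      IsIsomorphicTo v ![![1, 0, 0], ![5, 8, 0], ![5, 0, 8], ![-11, -8, -8]] := by
    intro i hi
    apply iso_perm v _ (Equiv.swap 0 i)
    apply iso_two_zero (v ∘ Equiv.swap 0 i) (h ∘ Equiv.swap 0 i)
    · intro a b
      simp only [Function.comp, hp]
      simp
    · fin_cases i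
      · simp
        omega
      · have : d3 (h 0) (h 2) (h 3) = 2 ∨ d3 (h 0) (h 2) (h 3) = -2 := by omega
        exact this
      · have : d3 (h 1) (h 0) (h 3) = - d3 (h 0) (h 1) (h 3) := by simp only [d3]; ring
        have : d3 (h 1) (h 0) (h 3) = 2 ∨ d3 (h 1) (h 0) (h 3) = -2 := by omega
        exact this
      · have : d3 (h 1) (h 2) (h 0) = d3 (h 0) (h 1) (h 2) := by simp only [d3]; ring
        have : d3 (h 1) (h 2) (h 0) = 2 ∨ d3 (h 1) (h 2) (h 0) = -2 := by omega
        exact this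
    · intro k
      have := Equiv.sum_comp (Equiv.swap 0 i) (fun j => h j k)
      simp only [Fin.sum_univ_four] at this
      simp only [Function.comp]
      rw [this]; exact hs k
    · intro k
      simpa using hi k
  obtain ⟨a, b, c, ha, hb, hc, hne, hdiv⟩ := exists_comb (h 1) (h 2) (h 3) (by omega)
  have p23 : d3 (h 2) (h 3) (h 1) = d3 (h 1) (h 2) (h 3) := by simp only [d3]; ring
  have p13 : d3 (h 1) (h 3) (h 2) = - d3 (h 1) (h 2) (h 3) := by simp only [d3]; ring
  rcases ha with rfl | rfl <;> rcases hb with rfl | rfl <;> rcases hc with rfl | rfl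
  · simp at hne
  · exact hfin 3 (by simpa using hdiv)
  · exact hfin 2 (by simpa using hdiv)
  · exact (no_pair v h hprim hp 2 3 1 (by omega) (by simpa using hdiv)).elim
  · exact hfin 1 (by simpa using hdiv)
  · exact (no_pair v h hprim hp 1 3 2 (by omega) (by simpa using hdiv)).elim
  · exact (no_pair v h hprim hp 1 2 3 (by omega) (by simpa using hdiv)).elim
  · refine hfin 0 fun k => ?_
    have h1 := hdiv k
    have h2 := hs k
    omega

lemma setup (g : ℕ) (hg : 0 < g) (v : Fin 4 → Fin 3 → ℤ) (hF : IsFanoSimplex v)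
    (hL : IsLatticeSet ((g : ℚ) • dualBody (simplexHull fun i => toQ (v i)))) :
    ∃ (h : Fin 4 → Fin 3 → ℤ) (A : Fin 4 → ℕ), (∀ i, 0 < A i) ∧
      (∀ i j, ∑ k, h i k * v j k = (if i = j then (A i : ℤ) else 0) - g) ∧
      ∑ i, (g : ℚ) / A i = 1 := by
  choose h hh using dual_vertices g hg v hF hL
  obtain ⟨-, -, w, hw, hw1, hw0⟩ := hF
  have key : ∀ i, (((∑ k, h i k * v i k) + g : ℤ) : ℚ) * w i = g := by
    intro i
    have h1 : ∑ j, w j * ((∑ k, h i k * v j k : ℤ) : ℚ) = 0 := by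
      push_cast
      simp only [Finset.mul_sum]
      rw [Finset.sum_comm]
      apply Finset.sum_eq_zero
      intro k _
      calc ∑ j, w j * ((h i k : ℚ) * v j k) = h i k * ∑ j, w j * toQ (v j) k := by
            rw [Finset.mul_sum]; exact Finset.sum_congr rfl fun j _ => by simp only [toQ]; ring
        _ = 0 := by rw [hw0 k, mul_zero]
    have h2 : ∀ j, w j * ((∑ k, h i k * v j k : ℤ) : ℚ) = - (g * w j) +
        if j = i then (((∑ k, h i k * v i k) + g : ℤ) : ℚ) * w i else 0 := by
      intro j
      split_ifs with hj
      · subst hj; push_cast; ring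
      · rw [hh i j hj]; push_cast; ring
    simp only [h2, Finset.sum_add_distrib, Finset.sum_ite_eq', Finset.mem_univ, if_true,
      Finset.sum_neg_distrib, ← Finset.mul_sum, hw1] at h1
    linarith
  have hgq : (0 : ℚ) < g := by exact_mod_cast hg
  have hpos : ∀ i, 0 < (∑ k, h i k * v i k) + (g : ℤ) := by
    intro i
    have h1 : (0 : ℚ) < (((∑ k, h i k * v i k) + g : ℤ) : ℚ) := by
      by_contra hn
      push Not at hn
      have := mul_nonpos_of_nonpos_of_nonneg hn (hw i).le
      rw [key i] at this
      linarith
    exact_mod_cast h1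
  have hcast : ∀ i, ((((∑ k, h i k * v i k) + (g : ℤ)).toNat : ℕ) : ℤ) =
      (∑ k, h i k * v i k) + g := fun i => Int.toNat_of_nonneg (hpos i).le
  refine ⟨h, fun i => ((∑ k, h i k * v i k) + (g : ℤ)).toNat, ?_, ?_, ?_⟩
  · intro i
    have := hpos i
    simp only
    omega
  · intro i j
    simp only [hcast]
    split_ifs with hij
    · subst hij; ring
    · rw [hh i j (Ne.symm hij)]; ring
  · rw [← hw1]
    refine Finset.sum_congr rfl fun i _ => ?_
    have h1 : ((((∑ k, h i k * v i k) + (g : ℤ)).toNat : ℕ) : ℚ) =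
      (((∑ k, h i k * v i k) + g : ℤ) : ℚ) := by
      rw [← Int.cast_natCast, hcast i]
    rw [h1]
    have h2 := key i
    have h3 : (((∑ k, h i k * v i k) + g : ℤ) : ℚ) ≠ 0 := by exact_mod_cast (hpos i).ne'
    rw [div_eq_iff h3, ← h2]; ring

lemma unit_frac_int (g : ℕ) (A : Fin 4 → ℕ) (hA : ∀ i, 0 < A i)
    (h : ∑ i, (g : ℚ) / A i = 1) :
    (g : ℤ) * ((A 1 : ℤ) * A 2 * A 3 + A 0 * A 2 * A 3 + A 0 * A 1 * A 3 + A 0 * A 1 * A 2) =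
      A 0 * A 1 * A 2 * A 3 := by
  rw [Fin.sum_univ_four] at h
  have q0 : ((A 0 : ℕ) : ℚ) ≠ 0 := by exact_mod_cast (hA _).ne'
  have q1 : ((A 1 : ℕ) : ℚ) ≠ 0 := by exact_mod_cast (hA _).ne'
  have q2 : ((A 2 : ℕ) : ℚ) ≠ 0 := by exact_mod_cast (hA _).ne'
  have q3 : ((A 3 : ℕ) : ℚ) ≠ 0 := by exact_mod_cast (hA _).ne'
  field_simp at h
  have h' : (g : ℚ) * ((A 1 : ℚ) * A 2 * A 3 + A 0 * A 2 * A 3 + A 0 * A 1 * A 3 +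
      A 0 * A 1 * A 2) = A 0 * A 1 * A 2 * A 3 := by linarith
  exact_mod_cast h'

lemma mult_target (g : ℕ) (hg : 0 < g) : multOf ![![1, 0, 0],
            ![4 * (g : ℤ) - 3, 4 * (g : ℤ), 0],
            ![4 * (g : ℤ) - 3, 0, 4 * (g : ℤ)],
            ![5 - 8 * (g : ℤ), -(4 * (g : ℤ)), -(4 * (g : ℤ))]] = 16 * g ^ 2 := by
  have e : d3 ![1, 0, 0] ![4 * (g : ℤ) - 3, 4 * (g : ℤ), 0] ![4 * (g : ℤ) - 3, 0, 4 * (g : ℤ)]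
      = ((16 * g ^ 2 : ℕ) : ℤ) := by
    simp [d3]; ring
  rw [mult_of_basis]
  · simp only [Matrix.cons_val]
    rw [e, Int.natAbs_natCast]
  · simp only [Matrix.cons_val]
    rw [e]
    have : 0 < 16 * g ^ 2 := by positivity
    exact_mod_cast this.ne'
  · refine ⟨-1, -1, -1, ?_⟩
    ext k
    fin_cases k <;> simp
    ring

lemma bound_core_s2 (g : ℕ) (hg : g = 1 ∨ g = 2) (v : Fin 4 → Fin 3 → ℤ)
    (hprim : ∀ i, IsPrimitive (v i)) (h : Fin 4 → Fin 3 → ℤ) (A : Fin 4 → ℕ)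
    (hA : ∀ i, 0 < A i)
    (hp : ∀ i j, ∑ k, h i k * v j k = (if i = j then (A i : ℤ) else 0) - g)
    (hs : ∑ i, (g : ℚ) / A i = 1) :
    multOf v ≤ 16 * g ^ 2 ∧ (multOf v = 16 * g ^ 2 → (∀ i, A i = 4 * g) ∧
      ∃ e : ℤ, (e = g ∨ e = -g) ∧ ∀ i, mn h i = e) := by
  have g0 : 0 < g := by omega
  have hei := unit_frac_int g A hA hs
  obtain ⟨K, n, W, N, β, hm, hW, hKA, hN, hmn, hK⟩ :=
    core g (by exact_mod_cast g0) v h (fun i => (A i : ℤ)) (fun i => by exact_mod_cast hA i) hp hei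
  obtain ⟨hle, heq⟩ := unit_frac g hg A hA hs
  have hNn : N.natAbs * β.natAbs * g * W.natAbs ^ 2 = ∏ i, A i := by
    have := congrArg Int.natAbs hN
    rw [Int.natAbs_mul, Int.natAbs_mul, Int.natAbs_mul, Int.natAbs_pow, Int.natAbs_natCast] at this
    rw [this, ← Nat.cast_prod, Int.natAbs_natCast]
  have hlcm : Finset.univ.lcm A ∣ g * W.natAbs := by
    apply Finset.lcm_dvd
    intro i _
    have h1 : ((A i : ℕ) : ℤ) ∣ (g : ℤ) * W := ⟨K i, by rw [← hKA i]; ring⟩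
    have h2 := Int.natAbs_dvd_natAbs.2 h1
    rwa [Int.natAbs_mul, Int.natAbs_natCast, Int.natAbs_natCast] at h2
  have hWp : 0 < W.natAbs := Int.natAbs_pos.2 hW
  have hlcmle : Finset.univ.lcm A ≤ g * W.natAbs := Nat.le_of_dvd (by positivity) hlcm
  have hprodpos : 0 < ∏ i, A i := Finset.prod_pos fun i _ => hA i
  have hNg : g ≤ N.natAbs := by
    have hN0 : N ≠ 0 := by
      rintro rfl
      simp at hNn
      exact hprodpos.ne hNn
    rcases hg with rfl | rfl
    · omega
    · have := N_even v h (fun i => (A i : ℤ)) hprim (by simpa using hp) (by simpa using hei)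
        N K n hmn hK
      omega
  have hsq : (Finset.univ.lcm A) ^ 2 ≤ (g * W.natAbs) ^ 2 := Nat.pow_le_pow_left hlcmle 2
  have hb1 : g * β.natAbs * g * W.natAbs ^ 2 ≤ N.natAbs * β.natAbs * g * W.natAbs ^ 2 := by gcongr
  have hb2 : 16 * g ^ 2 * (Finset.univ.lcm A) ^ 2 ≤ 16 * g ^ 2 * (g * W.natAbs) ^ 2 := by gcongr
  have e1 : g * β.natAbs * g * W.natAbs ^ 2 = β.natAbs * (g ^ 2 * W.natAbs ^ 2) := by ring
  have e2 : 16 * g ^ 2 * (g * W.natAbs) ^ 2 = 16 * g ^ 2 * (g ^ 2 * W.natAbs ^ 2) := by ring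
  have hpos : 0 < g ^ 2 * W.natAbs ^ 2 := by positivity
  rw [hm]
  constructor
  · apply Nat.le_of_mul_le_mul_right (c := g ^ 2 * W.natAbs ^ 2) _ hpos
    omega
  · intro hβ
    have e3 : β.natAbs * (g ^ 2 * W.natAbs ^ 2) = 16 * g ^ 2 * (g ^ 2 * W.natAbs ^ 2) := by rw [hβ]
    have hAll := heq (by omega)
    refine ⟨hAll, N * K 0, ?_, ?_⟩
    · -- N = ± g and K 0 = ± 1
      have hNe : N.natAbs = g := by
        have h1 : N.natAbs * (β.natAbs * g * W.natAbs ^ 2) = g * (β.natAbs * g * W.natAbs ^ 2) := by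
          have a1 : N.natAbs * (β.natAbs * g * W.natAbs ^ 2) =
            N.natAbs * β.natAbs * g * W.natAbs ^ 2 := by ring
          have a2 : g * (β.natAbs * g * W.natAbs ^ 2) = g * β.natAbs * g * W.natAbs ^ 2 := by ring
          omega
        have hβ0 : 0 < β.natAbs := by rw [hβ]; positivity
        exact Nat.eq_of_mul_eq_mul_right (by positivity) h1
      have hKK : ∀ i, K i = K 0 := by
        intro i
        have h1 := hKA i
        have h2 := hKA 0
        simp only [hAll] at h1 h2
        rw [← h2] at h1
        refine mul_right_cancel₀ ?_ h1
        have : 0 < 4 * g := by positivity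
        exact_mod_cast this.ne'
      have hu : K 0 = 1 ∨ K 0 = -1 := by
        have : IsUnit (K 0) := by
          apply IsUnit.of_mul_eq_one (∑ i, n i)
          rw [← hK, Finset.mul_sum]
          exact Finset.sum_congr rfl fun i _ => by rw [hKK i]; ring
        exact Int.isUnit_iff.1 this
      rcases hu with h1 | h1 <;> rw [h1] <;> omega
    · intro i
      have hKK : K i = K 0 := by
        have h1 := hKA i
        have h2 := hKA 0
        simp only [hAll] at h1 h2
        rw [← h2] at h1
        refine mul_right_cancel₀ ?_ h1
        have : 0 < 4 * g := by positivity
        exact_mod_cast this.ne'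
      rw [hmn, hKK]

/-- A Fano simplex of dimension 3 and Gorenstein index `g ∈ {1,2}`
has multiplicity at most `16 g²`, with equality iff it is isomorphic to the simplex
with vertex matrix having columns (1,0,0), (4g-3,4g,0), (4g-3,0,4g), (5-8g,-4g,-4g). -/
theorem mult_bound_dim3_gorenstein_le2
    (g : ℕ) (hg : g = 1 ∨ g = 2)
    (v : Fin 4 → Fin 3 → ℤ)
    (hFano : IsFanoSimplex v)
    (hGor : gorensteinIndex (fun i => toQ (v i)) = g) :
    multOf v ≤ 16 * g ^ 2 ∧
      (multOf v = 16 * g ^ 2 ↔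
        IsIsomorphicTo v
          ![![1, 0, 0],
            ![4 * (g : ℤ) - 3, 4 * (g : ℤ), 0],
            ![4 * (g : ℤ) - 3, 0, 4 * (g : ℤ)],
            ![5 - 8 * (g : ℤ), -(4 * (g : ℤ)), -(4 * (g : ℤ))]]) := by
  have g0 : 0 < g := by omega
  have hL : IsLatticeSet ((g : ℚ) • dualBody (simplexHull fun i => toQ (v i))) := by
    have hne : {g : ℕ | 0 < g ∧ IsLatticeSet ((g : ℚ) •
        dualBody (simplexHull fun i => toQ (v i)))}.Nonempty := by
      by_contra hcon
      rw [Set.not_nonempty_iff_eq_empty] at hcon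
      rw [gorensteinIndex, hcon, Nat.sInf_empty] at hGor
      omega
    have := Nat.sInf_mem hne
    rw [gorensteinIndex] at hGor
    rw [hGor] at this
    exact this.2
  obtain ⟨h, A, hA, hp, hs⟩ := setup g g0 v hFano hL
  obtain ⟨hle, heq⟩ := bound_core_s2 g hg v hFano.2.1 h A hA hp hs
  refine ⟨hle, fun hm => ?_, fun hiso => by rw [mult_iso _ _ hiso, mult_target g g0]⟩
  obtain ⟨hAll, e, he, hmn⟩ := heq hm
  rcases hg with rfl | rfl
  · have := iso_one v h (by simpa [hAll] using hp) (by
      have h0 : d3 (h 1) (h 2) (h 3) = e := hmn 0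
      rw [h0, Int.isUnit_iff]; simpa using he)
    norm_num
    exact this
  · have := iso_two v h hFano.2.1 (by simpa [hAll] using hp) e (by simpa using he) hmn
    norm_num
    exact this
end
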